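/- Fix an integer d ≥ 2. For every ε > 0 there exists N ∈ ℕ such that for every n ≥ N and every non-constant d-adic distribution μ on X_n, there exists β ∈ (0, 1/(d−1)] with ρ(Div(μ)) ≥ 2^{(f_d(β)−ε)·n}. -/

import Mathlib

/-- A `d`-adic distribution on `X_n`: nonnegative, sums to 1, each value `0` or `d^{-ℓ}`, `ℓ ≥ 1`. -/
def IsDadicDist (d n : ℕ) (μ : Fin n → ℝ) : Prop :=
  (∀ i, 0 ≤ μ i) ∧ (∑ i, μ i) = 1 ∧
  ∀ i, μ i = 0 ∨ ∃ ℓ : ℕ, 1 ≤ ℓ ∧ μ i = ((d : ℝ) ^ ℓ)⁻¹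

/-- An ordered partition of `X_n` into `d` pairwise disjoint sets covering `X_n`. -/
def IsOrderedPartition (d n : ℕ) (S : Fin d → Finset (Fin n)) : Prop :=
  (∀ j j', j ≠ j' → Disjoint (S j) (S j')) ∧
  (Finset.univ.biUnion S = Finset.univ)

/-- `S ∈ Div(μ)`: an ordered partition each of whose parts has `μ`-measure `1/d`. -/
def MemDiv (d n : ℕ) (μ : Fin n → ℝ) (S : Fin d → Finset (Fin n)) : Prop :=
  IsOrderedPartition d n S ∧ ∀ j, (∑ x ∈ S j, μ x) = 1 / (d : ℝ)

/-- A `d`-adic hitter: a collection of ordered partitions meeting `Div(μ)` for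
every non-constant `d`-adic distribution `μ` on `X_n`. -/
def IsHitter (d n : ℕ) (Q : Finset (Fin d → Finset (Fin n))) : Prop :=
  (∀ S ∈ Q, IsOrderedPartition d n S) ∧
  ∀ μ : Fin n → ℝ, IsDadicDist d n μ → (∃ i j, μ i ≠ μ j) → ∃ S ∈ Q, MemDiv d n μ S

/-- `q^{(d)}(n)`: minimum cardinality of a `d`-adic hitter on `X_n`. -/
noncomputable def qd (d n : ℕ) : ℕ :=
  sInf {m | ∃ Q : Finset (Fin d → Finset (Fin n)), IsHitter d n Q ∧ Q.card = m}

/-- `ρ_k(Div(μ))` for a type `k : Fin d → ℕ`. -/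
noncomputable def rhoType (d n : ℕ) (μ : Fin n → ℝ) (k : Fin d → ℕ) : ℝ :=
  (({S : Fin d → Finset (Fin n) | MemDiv d n μ S ∧ ∀ j, (S j).card = k j}.ncard : ℝ)) /
    (Nat.multinomial Finset.univ k : ℝ)

/-- `ρ(Div(μ)) = max over types k of ρ_k(Div(μ))`. -/
noncomputable def rhoDiv (d n : ℕ) (μ : Fin n → ℝ) : ℝ :=
  sSup {r | ∃ k : Fin d → ℕ, (∑ j, k j) = n ∧ r = rhoType d n μ k}

/-- `ρ^{(d)}_min(n)`: minimum of `ρ(Div(μ))` over non-constant `d`-adic `μ` on `X_n`. -/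
noncomputable def rhoMinD (d n : ℕ) : ℝ :=
  sInf {r | ∃ μ : Fin n → ℝ, IsDadicDist d n μ ∧ (∃ i j, μ i ≠ μ j) ∧ r = rhoDiv d n μ}

/-- `f_d(β) = dβ log₂ d − ((1−(d−1)β) log₂(1/(1−(d−1)β)) + (d−1)β log₂(1/β))`. -/
noncomputable def fdFun (d : ℕ) (β : ℝ) : ℝ :=
  (d : ℝ) * β * Real.logb 2 d -
    ((1 - ((d : ℝ) - 1) * β) * Real.logb 2 (1 / (1 - ((d : ℝ) - 1) * β)) +
      ((d : ℝ) - 1) * β * Real.logb 2 (1 / β))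

/-! Colour the points independently with a distribution `q` on the `d` labels. Conditioned on its
type a colouring is uniform, so the probability that the colour classes form a division of `μ` is at
most `ρ(Div(μ))`. It suffices to find `q` making this probability at least `p ^ n`, up to a
subexponential factor, where `log₂ p = f_d(β)` for the minimiser `β` of `f_d`.

The boundedly many heavy points are placed greedily, which leaves a target for each label. The light
points of each weight are split among the labels in the proportions of these targets, except for a
small reserve which then makes the sums exact. Let `q` give the probability `p` to the label with
the largest target and share `1 - p` among the others in the same proportions. A weight class
whose favoured label gets the fraction `a ∈ [1/d, 1]` then costs, per point, the relative entropy of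
`(a, 1 - a)` with respect to `(p, 1 - p)`. This is convex in `a`, and `p` is chosen so that it is
`-log p` at both ends of the interval. -/

section EquitableDivision

open Finset

section CriticalBias

/-- The minimiser of `fdFun d` on `(0, 1/(d-1)]`. -/
noncomputable def criticalBeta (d : ℕ) : ℝ :=
  1 / ((d : ℝ) - 1 + (d : ℝ) ^ ((d : ℝ) / (d - 1)))

/-- The probability of the favoured label when the other `d - 1` labels have average probability
`criticalBeta d`; it plays the role of `1 - (d-1)β` in `fdFun`. -/
noncomputable def criticalBias (d : ℕ) : ℝ :=
  1 - ((d : ℝ) - 1) * criticalBeta d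

variable {d : ℕ}

lemma criticalBeta_pos (hd : 2 ≤ d) : 0 < criticalBeta d := by
  have : (2 : ℝ) ≤ d := by exact_mod_cast hd
  have : (0 : ℝ) < (d : ℝ) ^ ((d : ℝ) / (d - 1)) := Real.rpow_pos_of_pos (by linarith) _
  exact one_div_pos.2 (by linarith)

lemma criticalBeta_le (hd : 2 ≤ d) : criticalBeta d ≤ 1 / ((d : ℝ) - 1) := by
  have : (2 : ℝ) ≤ d := by exact_mod_cast hd
  have : (0 : ℝ) ≤ (d : ℝ) ^ ((d : ℝ) / (d - 1)) := Real.rpow_nonneg d.cast_nonneg _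
  exact one_div_le_one_div_of_le (by linarith) (by linarith)

lemma criticalBias_eq_rpow_mul (hd : 2 ≤ d) :
    criticalBias d = (d : ℝ) ^ ((d : ℝ) / (d - 1)) * criticalBeta d := by
  have h : ((d : ℝ) - 1 + (d : ℝ) ^ ((d : ℝ) / (d - 1))) * criticalBeta d = 1 :=
    mul_one_div_cancel (one_div_pos.1 (criticalBeta_pos hd)).ne'
  rw [criticalBias]
  linear_combination -h

lemma criticalBias_pos (hd : 2 ≤ d) : 0 < criticalBias d := by
  rw [criticalBias_eq_rpow_mul hd]
  exact mul_pos (Real.rpow_pos_of_pos (by positivity) _) (criticalBeta_pos hd)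

lemma criticalBias_lt_one (hd : 2 ≤ d) : criticalBias d < 1 := by
  have : (2 : ℝ) ≤ d := by exact_mod_cast hd
  exact sub_lt_self _ (mul_pos (by linarith) (criticalBeta_pos hd))

lemma log_criticalBias (hd : 2 ≤ d) :
    Real.log (criticalBias d) = d / (d - 1) * Real.log d + Real.log (criticalBeta d) := by
  have hd0 : (0 : ℝ) < d := by positivity
  rw [criticalBias_eq_rpow_mul hd,
    Real.log_mul (Real.rpow_pos_of_pos hd0 _).ne' (criticalBeta_pos hd).ne', Real.log_rpow hd0]

lemma log_one_sub_criticalBias (hd : 2 ≤ d) :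
    Real.log (1 - criticalBias d) = Real.log (d - 1) + Real.log (criticalBeta d) := by
  have : (2 : ℝ) ≤ d := by exact_mod_cast hd
  rw [criticalBias, sub_sub_cancel, Real.log_mul (by linarith) (criticalBeta_pos hd).ne']

lemma fdFun_criticalBeta (hd : 2 ≤ d) :
    fdFun d (criticalBeta d) = Real.logb 2 (criticalBias d) := by
  have : (2 : ℝ) ≤ d := by exact_mod_cast hd
  have hd1 : (d : ℝ) - 1 ≠ 0 := by linarith
  have hp : criticalBias d = 1 - ((d : ℝ) - 1) * criticalBeta d := rfl
  rw [fdFun, ← hp]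
  simp only [Real.logb, one_div, Real.log_inv]
  rw [log_criticalBias hd]
  have hlog2 : Real.log 2 ≠ 0 := (Real.log_pos one_lt_two).ne'
  field_simp
  linear_combination (d * Real.log d + Real.log (criticalBeta d) * (d - 1)) * hp

/-- The chord of the binary entropy over `[1/d, 1]`; its slope is the log-odds of
`criticalBias d`. -/
lemma mul_le_binEntropy (hd : 2 ≤ d) {a : ℝ} (ha : 1 / (d : ℝ) ≤ a) (ha1 : a ≤ 1) :
    (1 - a) * (d / (d - 1) * Real.log d - Real.log (d - 1)) ≤ Real.binEntropy a := by
  have : (2 : ℝ) ≤ d := by exact_mod_cast hd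
  have hd0 : (0 : ℝ) < d := by linarith
  have hd1 : (0 : ℝ) < d - 1 := by linarith
  have ha' : 1 ≤ a * d := (div_le_iff₀ hd0).1 ha
  set t : ℝ := (1 - a) * (d / (d - 1)) with ht
  have ht0 : 0 ≤ t := mul_nonneg (by linarith) (by positivity)
  have ht1 : t ≤ 1 := by
    rw [ht, mul_div_assoc', div_le_one hd1]
    linarith
  have hchord := Real.strictConcave_binEntropy.concaveOn.2 (x := 1 / (d : ℝ)) (y := 1)
    ⟨by positivity, ha.trans ha1⟩ ⟨zero_le_one, le_rfl⟩ ht0 (sub_nonneg.2 ht1)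
    (add_sub_cancel _ _)
  have hcomb : t • (1 / (d : ℝ)) + (1 - t) • 1 = a := by
    simp only [smul_eq_mul, ht]
    field_simp
    ring
  rw [hcomb, Real.binEntropy_one, smul_zero, add_zero, smul_eq_mul] at hchord
  refine le_trans (le_of_eq ?_) hchord
  have hinv : 1 - 1 / (d : ℝ) = (d - 1) / d := by field_simp
  rw [Real.binEntropy, hinv, one_div, inv_inv, inv_div, Real.log_div hd0.ne' hd1.ne', ht]
  field_simp
  ring

lemma log_criticalBias_le_binEntropy_add (hd : 2 ≤ d) {a : ℝ} (ha : 1 / (d : ℝ) ≤ a)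
    (ha1 : a ≤ 1) :
    Real.log (criticalBias d) ≤ Real.binEntropy a + a * Real.log (criticalBias d) +
      (1 - a) * Real.log (1 - criticalBias d) := by
  have h := mul_le_binEntropy hd ha ha1
  rw [log_one_sub_criticalBias hd, log_criticalBias hd]
  linarith

lemma criticalBias_pow_mul_le (hd : 2 ≤ d) {c y : ℕ} (h : c + y ≤ d * c) :
    criticalBias d ^ (c + y) * ((c : ℝ) ^ c * (y : ℝ) ^ y) ≤
      ((c : ℝ) + y) ^ (c + y) * (criticalBias d ^ c * (1 - criticalBias d) ^ y) := by
  rcases y.eq_zero_or_pos with rfl | hy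
  · simp [mul_comm]
  have hc : 0 < c := Nat.pos_of_ne_zero fun hc => by simp [hc, hy.ne'] at h
  have hp := criticalBias_pos hd
  have hp1 := sub_pos.2 (criticalBias_lt_one hd)
  have hd0 : (0 : ℝ) < d := by positivity
  have hm : (0 : ℝ) < c + y := by positivity
  have hratio : 1 / (d : ℝ) ≤ c / (c + y) := by
    rw [div_le_div_iff₀ hd0 hm]
    have : (c : ℝ) + y ≤ d * c := by exact_mod_cast h
    linarith
  have hentropy := log_criticalBias_le_binEntropy_add hd hratio
    (div_le_one_of_le₀ (by simp) hm.le)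
  have hcompl : 1 - (c : ℝ) / (c + y) = y / (c + y) := by field_simp; ring
  rw [Real.binEntropy, hcompl, inv_div, inv_div, Real.log_div hm.ne' (by positivity),
    Real.log_div hm.ne' (by positivity)] at hentropy
  rw [← Real.log_le_log_iff (by positivity) (by positivity)]
  simp only [Real.log_mul, Real.log_pow, ne_eq, mul_eq_zero, pow_eq_zero_iff', hp.ne', hp1.ne',
    hm.ne', Nat.cast_eq_zero, hc.ne', hy.ne', false_and, or_self, not_false_eq_true]
  have := mul_le_mul_of_nonneg_left hentropy hm.le
  field_simp at this
  push_cast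
  linarith

end CriticalBias

section Multinomial

variable {κ : Type*}

lemma factorial_mul_pow_le_factorial_mul_pow (c k : ℕ) :
    c.factorial * c ^ k ≤ k.factorial * c ^ c := by
  rcases le_total c k with h | h
  · calc c.factorial * c ^ k = c.factorial * c ^ (k - c) * c ^ c := by
          rw [mul_assoc, ← pow_add, Nat.sub_add_cancel h]
      _ ≤ k.factorial * c ^ c := by gcongr; exact Nat.factorial_mul_pow_sub_le_factorial h
  · calc c.factorial * c ^ k = k.factorial * c.descFactorial (c - k) * c ^ k := by
          rw [← Nat.factorial_mul_descFactorial (c.sub_le k), Nat.sub_sub_self h]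
      _ ≤ k.factorial * c ^ (c - k) * c ^ k := by gcongr; exact Nat.descFactorial_le_pow _ _
      _ = k.factorial * c ^ c := by rw [mul_assoc, ← pow_add, Nat.sub_add_cancel h]

/-- The multinomial distribution with weights proportional to `c` has its mode at `c`. -/
lemma multinomial_mul_prod_pow_le_of_sum_eq (s : Finset κ) {c k : κ → ℕ}
    (h : ∑ j ∈ s, k j = ∑ j ∈ s, c j) :
    Nat.multinomial s k * ∏ j ∈ s, c j ^ k j ≤ Nat.multinomial s c * ∏ j ∈ s, c j ^ c j := by
  have hfact : (∏ j ∈ s, (c j).factorial) * ∏ j ∈ s, c j ^ k j ≤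
      (∏ j ∈ s, (k j).factorial) * ∏ j ∈ s, c j ^ c j := by
    simp only [← prod_mul_distrib]
    exact prod_le_prod' fun j _ => factorial_mul_pow_le_factorial_mul_pow (c j) (k j)
  have hspec : (∏ j ∈ s, (k j).factorial) * Nat.multinomial s k =
      (∏ j ∈ s, (c j).factorial) * Nat.multinomial s c := by
    rw [Nat.multinomial_spec, Nat.multinomial_spec, h]
  have hpos : 0 < (∏ j ∈ s, (c j).factorial) * ∏ j ∈ s, (k j).factorial := by positivity
  refine Nat.le_of_mul_le_mul_left ?_ hpos
  calc _ = (∏ j ∈ s, (k j).factorial) * Nat.multinomial s k *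
        ((∏ j ∈ s, (c j).factorial) * ∏ j ∈ s, c j ^ k j) := by ring
    _ ≤ (∏ j ∈ s, (c j).factorial) * Nat.multinomial s c *
        ((∏ j ∈ s, (k j).factorial) * ∏ j ∈ s, c j ^ c j) := by rw [hspec]; gcongr
    _ = _ := by ring

lemma card_piAntidiag_le [DecidableEq κ] (s : Finset κ) (m : ℕ) :
    #(s.piAntidiag m) ≤ (m + 1) ^ #s := by
  calc #(s.piAntidiag m) ≤ #(s.pi fun _ => range (m + 1)) := by
        refine card_le_card_of_injOn (fun k j _ => k j) (fun k hk => ?_) fun k hk k' hk' h => ?_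
        · obtain ⟨hsum, -⟩ := mem_piAntidiag.1 hk
          exact mem_pi.2 fun j hj => mem_range_succ_iff.2
            (hsum ▸ single_le_sum (fun _ _ => Nat.zero_le _) hj)
        · ext j
          by_cases hj : j ∈ s
          · exact congrFun (congrFun h j) hj
          · rw [not_not.1 (mt ((mem_piAntidiag.1 hk).2 j) hj),
              not_not.1 (mt ((mem_piAntidiag.1 hk').2 j) hj)]
    _ = (m + 1) ^ #s := by simp

variable [Fintype κ]

lemma sum_pow_sum_le_multinomial_mul (c : κ → ℕ) :
    (∑ j, c j) ^ (∑ j, c j) ≤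
      (∑ j, c j + 1) ^ Fintype.card κ * (Nat.multinomial univ c * ∏ j, c j ^ c j) := by
  classical
  set m := ∑ j, c j with hm
  calc m ^ m = ∑ k ∈ univ.piAntidiag m, Nat.multinomial univ k * ∏ j, c j ^ k j := by
        conv_lhs => rw [hm]
        exact sum_pow_eq_sum_piAntidiag univ c m
    _ ≤ #(univ.piAntidiag m) • (Nat.multinomial univ c * ∏ j, c j ^ c j) :=
        sum_le_card_nsmul _ _ _ fun k hk =>
          multinomial_mul_prod_pow_le_of_sum_eq univ (mem_piAntidiag.1 hk).1
    _ ≤ _ := by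
        rw [smul_eq_mul]
        gcongr
        exact card_piAntidiag_le univ m

lemma add_pow_le_pow_mul_exp {y : ℕ} {t : ℝ} (ht : 0 ≤ t) :
    ((y : ℝ) + t) ^ y ≤ (y : ℝ) ^ y * Real.exp t := by
  rcases y.eq_zero_or_pos with rfl | hy
  · simpa using ht
  have : (0 : ℝ) < y := by exact_mod_cast hy
  calc ((y : ℝ) + t) ^ y = (y : ℝ) ^ y * (t / y + 1) ^ y := by
        rw [← mul_pow]; congr 1; field_simp; ring
    _ ≤ (y : ℝ) ^ y * Real.exp (t / y) ^ y := by gcongr; exact Real.add_one_le_exp _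
    _ = (y : ℝ) ^ y * Real.exp t := by rw [← Real.exp_nat_mul]; congr 2; field_simp

/-- A vector of counts `c` whose largest entry is at `o` and whose other entries are in the
proportions `r`, up to a bounded rounding error: the exact scale would be
`z = ∑ j ≠ o, c j`. -/
structure IsNearlyProportional [DecidableEq κ] (o : κ) (r : κ → ℝ) (c : κ → ℕ) : Prop where
  le_dominant : ∀ j, c j ≤ c o
  exists_scale : ∃ z : ℝ, z ≤ ((∑ j ∈ univ.erase o, c j : ℕ) : ℝ) + Fintype.card κ ∧
    ∀ j ≠ o, (c j : ℝ) ≤ r j * z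

/-- The distribution giving probability `p` to `o` and sharing the rest in the proportions `r`. -/
def biasedWeights [DecidableEq κ] (o : κ) (p : ℝ) (r : κ → ℝ) (j : κ) : ℝ :=
  if j = o then p else (1 - p) * r j

section BiasedWeights

variable [DecidableEq κ] {o : κ} {p : ℝ} {r : κ → ℝ}

omit [Fintype κ] in
lemma biasedWeights_nonneg (hp : 0 ≤ p) (hp1 : p ≤ 1) (hr : ∀ j, 0 ≤ r j) (j : κ) :
    0 ≤ biasedWeights o p r j := by
  unfold biasedWeights
  split_ifs
  exacts [hp, mul_nonneg (sub_nonneg.2 hp1) (hr j)]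

lemma sum_biasedWeights (hr : ∑ j ∈ univ.erase o, r j = 1) :
    ∑ j, biasedWeights o p r j = 1 := by
  have hne : ∑ j ∈ univ.erase o, biasedWeights o p r j = ∑ j ∈ univ.erase o, (1 - p) * r j :=
    sum_congr rfl fun j hj => if_neg (ne_of_mem_erase hj)
  rw [← add_sum_erase univ _ (mem_univ o), hne, ← mul_sum, hr, biasedWeights, if_pos rfl]
  ring

lemma IsNearlyProportional.prod_pow_mul_le {c : κ → ℕ} (h : IsNearlyProportional o r c)
    (hr : ∀ j, 0 ≤ r j) (hr1 : ∑ j ∈ univ.erase o, r j = 1) (hp1 : p ≤ 1) :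
    (∏ j ∈ univ.erase o, (c j : ℝ) ^ c j) * (1 - p) ^ (∑ j ∈ univ.erase o, c j) ≤
      ((∑ j ∈ univ.erase o, c j : ℕ) : ℝ) ^ (∑ j ∈ univ.erase o, c j) *
        Real.exp (Fintype.card κ) * ∏ j ∈ univ.erase o, biasedWeights o p r j ^ c j := by
  obtain ⟨z, hz, hcz⟩ := h.exists_scale
  set y := ∑ j ∈ univ.erase o, c j
  have hp' : 0 ≤ 1 - p := sub_nonneg.2 hp1
  have hz0 : 0 ≤ z := by
    calc (0 : ℝ) ≤ ∑ j ∈ univ.erase o, (c j : ℝ) := by positivity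
      _ ≤ ∑ j ∈ univ.erase o, r j * z := sum_le_sum fun j hj => hcz j (ne_of_mem_erase hj)
      _ = z := by rw [← sum_mul, hr1, one_mul]
  have hweight : ∀ j ∈ univ.erase o,
      (c j : ℝ) ^ c j * (1 - p) ^ c j ≤ z ^ c j * biasedWeights o p r j ^ c j := by
    intro j hj
    rw [← mul_pow, ← mul_pow, biasedWeights, if_neg (ne_of_mem_erase hj)]
    refine pow_le_pow_left₀ (by positivity) ?_ _
    calc (c j : ℝ) * (1 - p) ≤ r j * z * (1 - p) := by
          gcongr
          exact hcz j (ne_of_mem_erase hj)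
      _ = z * ((1 - p) * r j) := by ring
  calc (∏ j ∈ univ.erase o, (c j : ℝ) ^ c j) * (1 - p) ^ y
      = ∏ j ∈ univ.erase o, (c j : ℝ) ^ c j * (1 - p) ^ c j := by
        rw [prod_mul_distrib, prod_pow_eq_pow_sum]
    _ ≤ ∏ j ∈ univ.erase o, z ^ c j * biasedWeights o p r j ^ c j :=
        prod_le_prod (fun j _ => by positivity) hweight
    _ = z ^ y * ∏ j ∈ univ.erase o, biasedWeights o p r j ^ c j := by
        rw [prod_mul_distrib, prod_pow_eq_pow_sum]
    _ ≤ _ := by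
        gcongr
        · exact prod_nonneg fun j hj => pow_nonneg (by
            rw [biasedWeights, if_neg (ne_of_mem_erase hj)]; exact mul_nonneg hp' (hr j)) _
        · calc z ^ y ≤ ((y : ℝ) + Fintype.card κ) ^ y := by gcongr
            _ ≤ _ := add_pow_le_pow_mul_exp (Nat.cast_nonneg _)

lemma IsNearlyProportional.criticalBias_pow_le {c : κ → ℕ} (h : IsNearlyProportional o r c)
    (hκ : 2 ≤ Fintype.card κ) (hr : ∀ j, 0 ≤ r j) (hr1 : ∑ j ∈ univ.erase o, r j = 1) :
    criticalBias (Fintype.card κ) ^ (∑ j, c j) ≤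
      (Real.exp 1 * (∑ j, c j + 1 : ℕ)) ^ Fintype.card κ *
        (Nat.multinomial univ c *
          ∏ j, biasedWeights o (criticalBias (Fintype.card κ)) r j ^ c j) := by
  set p := criticalBias (Fintype.card κ)
  have hp0 : 0 < p := criticalBias_pos hκ
  have hp1 : p < 1 := criticalBias_lt_one hκ
  set y := ∑ j ∈ univ.erase o, c j
  have hm : ∑ j, c j = c o + y := (add_sum_erase univ c (mem_univ o)).symm
  have hdom : c o + y ≤ Fintype.card κ * c o := by
    rw [← hm]
    exact sum_le_card_nsmul _ _ _ fun j _ => h.le_dominant j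
  have hpos : (0 : ℝ) < (c o : ℝ) ^ c o * (y : ℝ) ^ y := by
    exact_mod_cast Nat.mul_pos Nat.pow_self_pos Nat.pow_self_pos
  set M : ℝ := ((∑ j, c j + 1 : ℕ) : ℝ) ^ Fintype.card κ * Nat.multinomial univ c with hM
  have hmode : ((c o : ℝ) + y) ^ (c o + y) ≤
      M * ((c o : ℝ) ^ c o * ∏ j ∈ univ.erase o, (c j : ℝ) ^ c j) := by
    have := sum_pow_sum_le_multinomial_mul c
    rw [← mul_prod_erase univ _ (mem_univ o), ← mul_assoc] at this
    rw [hM, hm] at *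
    exact_mod_cast this
  refine le_of_mul_le_mul_right ?_ hpos
  calc p ^ (∑ j, c j) * ((c o : ℝ) ^ c o * (y : ℝ) ^ y)
      ≤ ((c o : ℝ) + y) ^ (c o + y) * (p ^ c o * (1 - p) ^ y) := by
        rw [hm]
        exact criticalBias_pow_mul_le hκ hdom
    _ ≤ M * ((c o : ℝ) ^ c o * ∏ j ∈ univ.erase o, (c j : ℝ) ^ c j) *
          (p ^ c o * (1 - p) ^ y) := by
        have := sub_pos.2 hp1
        gcongr
    _ = M * (c o : ℝ) ^ c o * p ^ c o *
          ((∏ j ∈ univ.erase o, (c j : ℝ) ^ c j) * (1 - p) ^ y) := by ring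
    _ ≤ M * (c o : ℝ) ^ c o * p ^ c o * ((y : ℝ) ^ y * Real.exp (Fintype.card κ) *
          ∏ j ∈ univ.erase o, biasedWeights o p r j ^ c j) :=
        mul_le_mul_of_nonneg_left (h.prod_pow_mul_le hr hr1 hp1.le) (by positivity)
    _ = _ := by
        rw [hM, ← mul_prod_erase univ _ (mem_univ o), mul_pow, ← Real.exp_one_pow]
        simp only [biasedWeights, if_true]
        ring

end BiasedWeights

end Multinomial

section Rearrangement

variable {α ι κ : Type*} [Fintype α] [DecidableEq α] [DecidableEq ι] [Fintype κ] [DecidableEq κ]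

omit [Fintype κ] in
lemma card_perm_comp_eq (f : α → κ) :
    #{σ : Equiv.Perm α | f ∘ σ = f} = ∏ j ∈ univ.image f, (#{a | f a = j}).factorial := by
  rw [← Fintype.card_subtype, DomMulAct.stabilizer_card']
  simp only [Fintype.card_subtype]

omit [Fintype α] [DecidableEq α] [Fintype κ] [DecidableEq κ] in
lemma comp_mul_inv_eq_self {f : α → κ} {σ τ : Equiv.Perm α} (h : f ∘ σ = f ∘ τ) :
    f ∘ (σ * τ⁻¹ : Equiv.Perm α) = f := by
  rw [Equiv.Perm.coe_mul, ← Function.comp_assoc, h, Function.comp_assoc, ← Equiv.Perm.coe_mul,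
    mul_inv_cancel, Equiv.Perm.coe_one, Function.comp_id]

/-- The functions obtained from `f` by permuting `α` inside the fibres of `lab`. -/
def rearrangements (lab : α → ι) (f : α → κ) : Finset (α → κ) :=
  ({σ : Equiv.Perm α | lab ∘ σ = lab} : Finset _).image fun σ : Equiv.Perm α => f ∘ σ

lemma prod_factorial_le_mul_card_rearrangements (lab : α → ι) (f : α → κ) :
    ∏ i ∈ univ.image lab, (#{a | lab a = i}).factorial ≤
      (∏ i ∈ univ.image lab, ∏ j, (#{a | lab a = i ∧ f a = j}).factorial) *
        #(rearrangements lab f) := by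
  have hpair : ∏ i ∈ univ.image lab, ∏ j, (#{a | lab a = i ∧ f a = j}).factorial =
      #{σ : Equiv.Perm α | (fun a => (lab a, f a)) ∘ σ = fun a => (lab a, f a)} := by
    rw [card_perm_comp_eq, ← prod_product']
    simp only [Prod.ext_iff]
    refine (prod_subset (fun x hx => ?_) fun x _ hx => ?_).symm
    · obtain ⟨a, -, rfl⟩ := mem_image.1 hx
      simp
    · rw [filter_eq_empty_iff.2, card_empty, Nat.factorial_zero]
      exact fun a ha h => hx (mem_image.2 ⟨a, ha, Prod.ext h.1 h.2⟩)
  rw [hpair, ← card_perm_comp_eq]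
  refine card_le_mul_card_image _ _ fun g hg => ?_
  obtain ⟨τ, hτ, rfl⟩ := mem_image.1 hg
  refine card_le_card_of_injOn (· * τ⁻¹) (fun σ hσ => ?_) (mul_left_injective _).injOn
  simp only [coe_filter, mem_filter, mem_univ, true_and, Set.mem_ofPred_eq] at hσ hτ ⊢
  have hlab : lab ∘ (σ * τ⁻¹ : Equiv.Perm α) = lab :=
    comp_mul_inv_eq_self (hσ.1.trans hτ.symm)
  have hf : f ∘ (σ * τ⁻¹ : Equiv.Perm α) = f := comp_mul_inv_eq_self hσ.2
  exact funext fun a => Prod.ext (congrFun hlab a) (congrFun hf a)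

lemma prod_multinomial_le_card_rearrangements (lab : α → ι) (f : α → κ) (I : Finset ι) :
    ∏ i ∈ I, Nat.multinomial univ (fun j => #{a | lab a = i ∧ f a = j}) ≤
      #(rearrangements lab f) := by
  set count : ι → κ → ℕ := fun i j => #{a | lab a = i ∧ f a = j} with hcount
  have hspec : ∀ i, (∏ j, (count i j).factorial) * Nat.multinomial univ (count i) =
      (#{a | lab a = i}).factorial := by
    intro i
    rw [Nat.multinomial_spec, card_eq_sum_card_fiberwise (t := univ) (f := f) fun _ _ => mem_univ _]
    simp only [hcount, filter_filter]
  have himage : ∏ i ∈ univ.image lab, Nat.multinomial univ (count i) ≤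
      #(rearrangements lab f) := by
    have h := prod_factorial_le_mul_card_rearrangements lab f
    simp only [← hspec, prod_mul_distrib] at h
    exact Nat.le_of_mul_le_mul_left h (by positivity)
  refine le_trans ?_ himage
  calc ∏ i ∈ I, Nat.multinomial univ (count i)
      = ∏ i ∈ I ∩ univ.image lab, Nat.multinomial univ (count i) := by
        refine (prod_subset inter_subset_left fun i hi hi' => ?_).symm
        have : count i = 0 := by
          ext j
          refine card_eq_zero.2 (filter_eq_empty_iff.2 fun a _ ha => hi' ?_)
          exact mem_inter.2 ⟨hi, mem_image.2 ⟨a, mem_univ a, ha.1⟩⟩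
        simp [this, Nat.multinomial]
    _ ≤ _ := prod_le_prod_of_subset_of_one_le' inter_subset_right
        fun _ _ _ => Nat.multinomial_pos _ _

end Rearrangement

section RandomLabelling

variable {d n : ℕ} {μ : Fin n → ℝ}

lemma rhoType_le_rhoDiv (μ : Fin n → ℝ) {k : Fin d → ℕ} (hk : ∑ j, k j = n) :
    rhoType d n μ k ≤ rhoDiv d n μ := by
  refine le_csSup (Set.Finite.bddAbove ?_) ⟨k, hk, rfl⟩
  refine ((piAntidiag univ n).image (rhoType d n μ)).finite_toSet.subset ?_
  rintro r ⟨k, hk, rfl⟩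
  simpa using ⟨k, hk, rfl⟩

lemma memDiv_fibers {f : Fin n → Fin d} (hf : ∀ j, ∑ x with f x = j, μ x = 1 / (d : ℝ)) :
    MemDiv d n μ fun j => {x | f x = j} := by
  refine ⟨⟨fun j j' hj => disjoint_filter.2 fun x _ h h' => hj (h ▸ h'), ?_⟩, hf⟩
  ext x
  simp

lemma card_le_rhoType_mul_multinomial {F : Finset (Fin n → Fin d)} {k : Fin d → ℕ}
    (hF : ∀ f ∈ F, ∀ j, ∑ x with f x = j, μ x = 1 / (d : ℝ))
    (hFk : ∀ f ∈ F, ∀ j, #{x | f x = j} = k j) :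
    (#F : ℝ) ≤ rhoType d n μ k * Nat.multinomial univ k := by
  rw [rhoType, div_mul_cancel₀ _ (by exact_mod_cast (Nat.multinomial_pos _ _).ne'), Nat.cast_le,
    ← Set.ncard_coe_finset]
  refine Set.ncard_le_ncard_of_injOn (fun f j => ({x | f x = j} : Finset (Fin n)))
    (fun f hf => ⟨memDiv_fibers (hF f hf), hFk f hf⟩) (fun f _ g _ h => ?_) (Set.toFinite _)
  ext x
  have : x ∈ ({y | g y = f x} : Finset (Fin n)) := by simp [← congrFun h (f x)]
  simp_all

/-- Conditioned on its type, a random labelling is uniform, so it is a division with conditional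
probability at most `rhoDiv d n μ`. -/
lemma sum_prod_le_rhoDiv {F : Finset (Fin n → Fin d)}
    (hF : ∀ f ∈ F, ∀ j, ∑ x with f x = j, μ x = 1 / (d : ℝ)) {q : Fin d → ℝ}
    (hq : ∀ j, 0 ≤ q j) (hq1 : ∑ j, q j = 1) :
    ∑ f ∈ F, ∏ x, q (f x) ≤ rhoDiv d n μ := by
  set type : (Fin n → Fin d) → Fin d → ℕ := fun f j => #{x | f x = j} with htype
  have htype_mem : ∀ f ∈ F, type f ∈ piAntidiag univ n := fun f _ => by
    simp [htype, ← card_eq_sum_card_fiberwise (t := univ) (f := f) fun _ _ => mem_univ _]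
  have hprod : ∀ f, ∏ x, q (f x) = ∏ j, q j ^ type f j := fun f => by
    simp [htype, ← prod_fiberwise' univ f]
  calc ∑ f ∈ F, ∏ x, q (f x)
      = ∑ k ∈ piAntidiag univ n, #{f ∈ F | type f = k} * ∏ j, q j ^ k j := by
        rw [← sum_fiberwise_of_maps_to htype_mem]
        refine sum_congr rfl fun k _ => ?_
        rw [← nsmul_eq_mul, ← sum_const]
        exact sum_congr rfl fun f hf => by rw [hprod, (mem_filter.1 hf).2]
    _ ≤ ∑ k ∈ piAntidiag univ n, rhoDiv d n μ * (Nat.multinomial univ k * ∏ j, q j ^ k j) := by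
        refine sum_le_sum fun k hk => ?_
        rw [← mul_assoc]
        refine mul_le_mul_of_nonneg_right ?_ (prod_nonneg fun j _ => pow_nonneg (hq j) _)
        calc (#{f ∈ F | type f = k} : ℝ) ≤ rhoType d n μ k * Nat.multinomial univ k :=
              card_le_rhoType_mul_multinomial (fun f hf => hF f (mem_filter.1 hf).1)
                fun f hf => congrFun (mem_filter.1 hf).2
          _ ≤ _ := by gcongr; exact rhoType_le_rhoDiv μ (mem_piAntidiag.1 hk).1
    _ = rhoDiv d n μ := by
        rw [← mul_sum, ← sum_pow_eq_sum_piAntidiag, hq1, one_pow, mul_one]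

lemma prod_multinomial_mul_prod_le_rhoDiv {β : Type*} [DecidableEq β] {w : Fin n → β}
    (hw : ∀ x y, w x = w y → μ x = μ y) {f : Fin n → Fin d}
    (hf : ∀ j, ∑ x with f x = j, μ x = 1 / (d : ℝ)) (R : Finset (Fin n)) {q : Fin d → ℝ}
    (hq : ∀ j, 0 ≤ q j) (hq1 : ∑ j, q j = 1) :
    (∏ v ∈ univ.image w, (Nat.multinomial univ fun j => #{x ∈ Rᶜ | w x = v ∧ f x = j} : ℝ)) *
      ∏ x, q (f x) ≤ rhoDiv d n μ := by
  classical
  set lab : Fin n → β × Prop := fun x => (w x, x ∈ R) with hlab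
  have hF : ∀ g ∈ rearrangements lab f, (∀ j, ∑ x with g x = j, μ x = 1 / (d : ℝ)) ∧
      ∏ x, q (g x) = ∏ x, q (f x) := by
    intro g hg
    obtain ⟨σ, hσ, rfl⟩ := mem_image.1 hg
    have hμ : ∀ x, μ (σ x) = μ x := fun x =>
      hw _ _ (congrArg Prod.fst (congrFun (mem_filter.1 hσ).2 x))
    refine ⟨fun j => ?_, Equiv.prod_comp σ fun x => q (f x)⟩
    rw [← hf j, sum_filter, sum_filter,
      ← Equiv.sum_comp σ fun x => if f x = j then μ x else 0]
    simp only [hμ, Function.comp_apply]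
  calc _ ≤ (#(rearrangements lab f) : ℝ) * ∏ x, q (f x) := by
        refine mul_le_mul_of_nonneg_right ?_ (prod_nonneg fun x _ => hq _)
        have hclass : ∀ v j, ({x ∈ Rᶜ | w x = v ∧ f x = j} : Finset _) =
            ({x | lab x = (v, False) ∧ f x = j} : Finset _) := fun v j => by
          ext x
          simp only [hlab, mem_filter, mem_compl, mem_univ, true_and, Prod.mk.injEq, eq_iff_iff,
            iff_false]
          tauto
        have h := prod_multinomial_le_card_rearrangements lab f
          ((univ.image w).image fun v => (v, False))
        rw [prod_image fun _ _ _ _ h => congrArg Prod.fst h] at h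
        simp only [hclass]
        exact_mod_cast h
    _ = ∑ g ∈ rearrangements lab f, ∏ x, q (g x) := by
        rw [← nsmul_eq_mul, ← sum_const]
        exact sum_congr rfl fun g hg => (hF g hg).2.symm
    _ ≤ rhoDiv d n μ := sum_prod_le_rhoDiv (fun g hg => (hF g hg).1) hq hq1

end RandomLabelling

section Filling

variable {α κ : Type*}

lemma sum_filter_update [DecidableEq α] [DecidableEq κ] (w : α → ℕ) (f : α → κ) {s : Finset α}
    {a : α} (has : a ∉ s) (k j : κ) :
    ∑ x ∈ insert a s with Function.update f a k x = j, w x =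
      (if k = j then w a else 0) + ∑ x ∈ s with f x = j, w x := by
  rw [sum_filter, sum_insert has, Function.update_self, sum_filter]
  congr 1
  exact sum_congr rfl fun x hx => by rw [Function.update_of_ne (ne_of_mem_of_not_mem hx has)]

/-- Place the elements in order of decreasing weight, each into some part other than `o` with room
left. A part that is not full always has room, because its deficit is a multiple of the weight. -/
lemma exists_greedy_fill [DecidableEq κ] (o : κ) (w : α → ℕ) (T : ℕ) (s : Finset α)
    (hw : ∀ x ∈ s, ∀ y ∈ s, w x ≤ w y → w x ∣ w y) (hT : ∀ x ∈ s, w x ∣ T) :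
    ∃ f : α → κ, (∀ j ≠ o, ∑ x ∈ s with f x = j, w x ≤ T) ∧
      ((∀ j ≠ o, ∑ x ∈ s with f x = j, w x = T) ∨ ∀ x ∈ s, f x ≠ o) := by
  classical
  induction s using Finset.induction_on_min_value w with
  | empty => exact ⟨fun _ => o, by simp, by simp⟩
  | insert a s has hmin ih =>
    obtain ⟨f, hle, hf⟩ := ih
      (fun x hx y hy => hw x (mem_insert_of_mem hx) y (mem_insert_of_mem hy))
      fun x hx => hT x (mem_insert_of_mem hx)
    by_cases hfull : ∀ j ≠ o, ∑ x ∈ s with f x = j, w x = T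
    · have hload : ∀ j ≠ o, ∑ x ∈ insert a s with Function.update f a o x = j, w x = T :=
        fun j hj => by rw [sum_filter_update w f has, if_neg hj.symm, zero_add, hfull j hj]
      exact ⟨Function.update f a o, fun j hj => (hload j hj).le, Or.inl hload⟩
    · have hfo := hf.resolve_left hfull
      push Not at hfull
      obtain ⟨k, hk, hkT⟩ := hfull
      have hroom : w a ≤ T - ∑ x ∈ s with f x = k, w x := by
        refine Nat.le_of_dvd (Nat.sub_pos_of_lt (lt_of_le_of_ne (hle k hk) hkT)) ?_
        refine Nat.dvd_sub (hT a (mem_insert_self _ _)) (dvd_sum fun x hx => ?_)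
        have hxs := mem_of_mem_filter x hx
        exact hw a (mem_insert_self _ _) x (mem_insert_of_mem hxs) (hmin x hxs)
      refine ⟨Function.update f a k, fun j hj => ?_, Or.inr fun x hx => ?_⟩
      · have hlej := hle j hj
        rw [sum_filter_update w f has]
        split_ifs with hkj
        · subst hkj
          lia
        · rwa [zero_add]
      · rcases mem_insert.1 hx with rfl | hxs
        · rwa [Function.update_self]
        · rw [Function.update_of_ne (ne_of_mem_of_not_mem hxs has)]
          exact hfo x hxs

variable [Fintype κ]

/-- Place the elements in order of decreasing weight. By pigeonhole some target exceeds the current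
weight: otherwise the remaining total would be smaller than what the lighter elements alone
weigh. -/
lemma exists_exact_fill [DecidableEq κ] [Nonempty κ] (w : α → ℕ) {u : ℕ} (s : Finset α)
    (T : κ → ℕ) (hsum : ∑ x ∈ s, w x = ∑ j, T j) (hw : ∀ x ∈ s, u ∣ w x) (hT : ∀ j, u ∣ T j)
    (hdom : ∀ x ∈ s, Fintype.card κ * w x ≤ ∑ y ∈ s with w y < w x, w y ∨ w x = u) :
    ∃ f : α → κ, ∀ j, ∑ x ∈ s with f x = j, w x = T j := by
  classical
  induction s using Finset.induction_on_max_value w generalizing T with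
  | empty =>
    have hT0 : ∀ j, T j = 0 := by simpa using hsum.symm
    exact ⟨fun _ => Classical.arbitrary κ, fun j => by simp [hT0 j]⟩
  | insert a s has hmax ih =>
    rw [sum_insert has] at hsum
    obtain ⟨k, hk⟩ : ∃ k, w a ≤ T k := by
      by_contra! hlt
      rcases hdom a (mem_insert_self _ _) with h | rfl
      · have hlighter : ∑ y ∈ insert a s with w y < w a, w y ≤ ∑ y ∈ s, w y := by
          rw [filter_insert, if_neg (lt_irrefl _)]
          exact sum_le_sum_of_subset (filter_subset _ _)
        have := sum_lt_sum_of_nonempty (univ_nonempty (α := κ)) fun j _ => hlt j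
        simp only [sum_const, card_univ, smul_eq_mul] at this
        lia
      · have hT0 : ∑ j, T j = 0 := sum_eq_zero fun j _ => Nat.eq_zero_of_dvd_of_lt (hT j) (hlt j)
        have := hlt (Classical.arbitrary κ)
        lia
    have hsum' : ∑ x ∈ s, w x = ∑ j, Function.update T k (T k - w a) j := by
      rw [sum_update_of_mem (mem_univ k), sdiff_singleton_eq_erase]
      have := add_sum_erase univ T (mem_univ k)
      lia
    obtain ⟨f, hf⟩ := ih (Function.update T k (T k - w a)) hsum'
      (fun x hx => hw x (mem_insert_of_mem hx))
      (fun j => by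
        rcases eq_or_ne j k with rfl | hj
        · simpa using Nat.dvd_sub (hT j) (hw a (mem_insert_self _ _))
        · simpa [hj] using hT j)
      (fun x hx => by
        refine (hdom x (mem_insert_of_mem hx)).imp_left fun h => ?_
        rwa [filter_insert, if_neg (not_lt.2 (hmax x hx))] at h)
    refine ⟨Function.update f a k, fun j => ?_⟩
    rw [sum_filter_update w f has, hf j]
    rcases eq_or_ne k j with rfl | hj
    · simp [hk]
    · simp [hj, hj.symm]

lemma exists_exact_extension [DecidableEq κ] [Nonempty κ] (w : α → ℕ) {u : ℕ} (s : Finset α)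
    (h : α → Option κ) (g : κ → ℕ) (hsum : ∑ x ∈ s, w x = ∑ j, g j)
    (hle : ∀ j, ∑ x ∈ s with h x = some j, w x ≤ g j)
    (hw : ∀ x ∈ s, h x = none → u ∣ w x) (hg : ∀ j, u ∣ g j)
    (hload : ∀ j, u ∣ ∑ x ∈ s with h x = some j, w x)
    (hdom : ∀ x ∈ s, h x = none →
      Fintype.card κ * w x ≤ ∑ y ∈ s with h y = none ∧ w y < w x, w y ∨ w x = u) :
    ∃ f : α → κ, (∀ x j, h x = some j → f x = j) ∧ ∀ j, ∑ x ∈ s with f x = j, w x = g j := by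
  have htotal : ∑ x ∈ s, w x =
      ∑ x ∈ s with h x = none, w x + ∑ j, ∑ x ∈ s with h x = some j, w x := by
    rw [← sum_fiberwise s h w, Fintype.sum_option]
  have hsum' : ∑ x ∈ s with h x = none, w x = ∑ j, (g j - ∑ x ∈ s with h x = some j, w x) := by
    have := sum_tsub_distrib univ fun j _ => hle j
    lia
  obtain ⟨f, hf⟩ := exists_exact_fill w {x ∈ s | h x = none} _ hsum'
    (fun x hx => hw x (mem_filter.1 hx).1 (mem_filter.1 hx).2)
    (fun j => Nat.dvd_sub (hg j) (hload j))
    (fun x hx => by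
      rw [filter_filter]
      exact hdom x (mem_filter.1 hx).1 (mem_filter.1 hx).2)
  refine ⟨fun x => (h x).getD (f x), fun x j hx => by simp [hx], fun j => ?_⟩
  have hsplit : ∑ x ∈ s with (h x).getD (f x) = j, w x =
      ∑ x ∈ s with h x = some j, w x + ∑ x ∈ s with h x = none ∧ f x = j, w x := by
    simp only [sum_filter, ← sum_add_distrib]
    refine sum_congr rfl fun x _ => ?_
    rcases h x with _ | i <;> simp
  rw [hsplit, ← filter_filter, hf j, Nat.add_sub_cancel' (hle j)]

end Filling

section ProportionalSplit

variable {α β κ : Type*}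

lemma sum_comp_le_mul_sum_comp [DecidableEq β] {w : α → β} {φ : β → ℝ} (hφ : ∀ v, 0 ≤ φ v)
    {s t : Finset α} {a : ℝ}
    (h : ∀ v, (#{x ∈ s | w x = v} : ℝ) ≤ a * #{x ∈ t | w x = v}) :
    ∑ x ∈ s, φ (w x) ≤ a * ∑ x ∈ t, φ (w x) := by
  classical
  have hfiber : ∀ r ⊆ s ∪ t, ∑ x ∈ r, φ (w x) =
      ∑ v ∈ (s ∪ t).image w, #{x ∈ r | w x = v} * φ v := by
    intro r hr
    rw [← sum_fiberwise_of_maps_to fun x hx => mem_image_of_mem w (hr hx)]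
    refine sum_congr rfl fun v _ => ?_
    rw [← nsmul_eq_mul, ← sum_const]
    exact sum_congr rfl fun x hx => by rw [(mem_filter.1 hx).2]
  rw [hfiber s subset_union_left, hfiber t subset_union_right, mul_sum]
  refine sum_le_sum fun v _ => ?_
  rw [← mul_assoc]
  exact mul_le_mul_of_nonneg_right (h v) (hφ v)

lemma le_sum_floor_mul_add_card (s : Finset κ) (a : κ → ℝ) (y : ℝ) :
    (∑ j ∈ s, a j) * y ≤ ((∑ j ∈ s, ⌊a j * y⌋₊ : ℕ) : ℝ) + #s := by
  rw [sum_mul, Nat.cast_sum, ← nsmul_one, ← sum_const, ← sum_add_distrib]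
  exact sum_le_sum fun j _ => (Nat.lt_floor_add_one _).le

variable [Fintype κ]

lemma exists_partial_labelling_card_eq [DecidableEq κ] (s : Finset α) {c : κ → ℕ}
    (hc : ∑ j, c j ≤ #s) : ∃ h : α → Option κ, ∀ j, #{x ∈ s | h x = some j} = c j := by
  classical
  obtain ⟨e⟩ : Nonempty ((Σ j, Fin (c j)) ↪ s) :=
    Function.Embedding.nonempty_of_card_le (by simpa using hc)
  have he : Function.Injective fun p => (e p : α) := Subtype.val_injective.comp e.injective
  refine ⟨Function.extend (fun p => (e p : α)) (fun p => some p.1) fun _ => none, fun j => ?_⟩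
  have himage : {x ∈ s | Function.extend (fun p => (e p : α)) (fun p => some p.1)
      (fun _ => none) x = some j} = univ.image fun i : Fin (c j) => (e ⟨j, i⟩ : α) := by
    ext x
    simp only [mem_filter, mem_image, mem_univ, true_and]
    constructor
    · rintro ⟨-, hx⟩
      by_cases hxe : ∃ p, (e p : α) = x
      · obtain ⟨⟨k, i⟩, rfl⟩ := hxe
        rw [he.extend_apply] at hx
        obtain rfl := Option.some_injective _ hx
        exact ⟨i, rfl⟩
      · simp [Function.extend_apply' _ _ _ hxe] at hx
    · rintro ⟨i, rfl⟩
      exact ⟨(e _).2, he.extend_apply _ _ _⟩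
  rw [himage, card_image_of_injective _ fun i i' h => by simpa using he h, card_univ,
    Fintype.card_fin]

variable [DecidableEq κ] {o : κ}

lemma IsNearlyProportional.of_eq_zero (r : κ → ℝ) {c : κ → ℕ} (hc : ∀ j ≠ o, c j = 0) :
    IsNearlyProportional o r c where
  le_dominant j := by
    rcases eq_or_ne j o with rfl | hj
    exacts [le_rfl, hc j hj ▸ Nat.zero_le _]
  exists_scale := ⟨0, by positivity, fun j hj => by simp [hc j hj]⟩

lemma IsNearlyProportional.of_le {r : κ → ℝ} {c c' : κ → ℕ} (h : IsNearlyProportional o r c)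
    (ho : c o ≤ c' o) (hc : ∀ j ≠ o, c' j = c j) : IsNearlyProportional o r c' where
  le_dominant j := by
    rcases eq_or_ne j o with rfl | hj
    exacts [le_rfl, hc j hj ▸ (h.le_dominant j).trans ho]
  exists_scale := by
    obtain ⟨z, hz, hcz⟩ := h.exists_scale
    refine ⟨z, hz.trans_eq ?_, fun j hj => hc j hj ▸ hcz j hj⟩
    rw [sum_congr rfl fun j hj => hc j (ne_of_mem_erase hj)]

variable {a : κ → ℝ}

lemma isNearlyProportional_floor (ha : ∀ j, 0 ≤ a j) (ha1 : ∑ j, a j = 1)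
    (hmax : ∀ j, a j ≤ a o) (hao : a o < 1) {y : ℝ} (hy : 0 ≤ y) :
    IsNearlyProportional o (fun j => a j / (1 - a o)) fun j => ⌊a j * y⌋₊ where
  le_dominant j := Nat.floor_mono (mul_le_mul_of_nonneg_right (hmax j) hy)
  exists_scale := by
    have hne : 1 - a o ≠ 0 := (sub_pos.2 hao).ne'
    have hrest : ∑ j ∈ univ.erase o, a j = 1 - a o := by
      rw [← ha1, ← add_sum_erase univ a (mem_univ o), add_sub_cancel_left]
    refine ⟨(1 - a o) * y, ?_, fun j _ => ?_⟩
    · calc (1 - a o) * y ≤ ((∑ j ∈ univ.erase o, ⌊a j * y⌋₊ : ℕ) : ℝ) + #(univ.erase o) :=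
            hrest ▸ le_sum_floor_mul_add_card _ a y
        _ ≤ _ := by
            gcongr
            exact card_le_univ _
    · calc (⌊a j * y⌋₊ : ℝ) ≤ a j * y := Nat.floor_le (mul_nonneg (ha j) hy)
        _ = a j / (1 - a o) * ((1 - a o) * y) := by field_simp

lemma exists_proportional_labelling (s : Finset α) (ha : ∀ j, 0 ≤ a j) (ha1 : ∑ j, a j = 1)
    (hmax : ∀ j, a j ≤ a o) (hao : a o < 1) {θ : ℝ} (hθ : 0 ≤ θ) (hθ1 : θ ≤ 1) :
    ∃ h : α → Option κ,
      IsNearlyProportional o (fun j => a j / (1 - a o)) (fun j => #{x ∈ s | h x = some j}) ∧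
      (∀ j, (#{x ∈ s | h x = some j} : ℝ) ≤ a j * (1 - θ) * #s) ∧
      θ * #s ≤ #{x ∈ s | h x = none} ∧
      (#{x ∈ s | h x = none} : ℝ) ≤ θ * #s + Fintype.card κ := by
  set y : ℝ := (1 - θ) * #s
  have hy0 : 0 ≤ y := mul_nonneg (sub_nonneg.2 hθ1) (Nat.cast_nonneg _)
  have hfloor : ∀ j, (⌊a j * y⌋₊ : ℝ) ≤ a j * y := fun j => Nat.floor_le (mul_nonneg (ha j) hy0)
  have hsum_le : ((∑ j, ⌊a j * y⌋₊ : ℕ) : ℝ) ≤ y := by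
    calc ((∑ j, ⌊a j * y⌋₊ : ℕ) : ℝ) ≤ ∑ j, a j * y := by
          rw [Nat.cast_sum]
          exact sum_le_sum fun j _ => hfloor j
      _ = y := by rw [← sum_mul, ha1, one_mul]
  have hle_sum := le_sum_floor_mul_add_card univ a y
  rw [ha1, one_mul, card_univ] at hle_sum
  have hfit : ∑ j, ⌊a j * y⌋₊ ≤ #s := by
    have : y ≤ #s := mul_le_of_le_one_left (Nat.cast_nonneg _) (sub_le_self 1 hθ)
    exact_mod_cast hsum_le.trans this
  obtain ⟨h, hh⟩ := exists_partial_labelling_card_eq s hfit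
  have hnone : (#s : ℝ) = #{x ∈ s | h x = none} + ((∑ j, ⌊a j * y⌋₊ : ℕ) : ℝ) := by
    have := card_eq_sum_card_fiberwise (s := s) (t := univ) (f := h) fun _ _ => mem_univ _
    rw [Fintype.sum_option] at this
    simp only [hh] at this
    exact_mod_cast this
  refine ⟨h, ?_, fun j => ?_, ?_, ?_⟩
  · simpa only [hh] using isNearlyProportional_floor ha ha1 hmax hao hy0
  · rw [hh, mul_assoc]
    exact hfloor j
  · linarith
  · linarith

lemma exists_proportional_labelling_fiberwise [DecidableEq β] (s : Finset α) (w : α → β)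
    (ha : ∀ j, 0 ≤ a j) (ha1 : ∑ j, a j = 1) (hmax : ∀ j, a j ≤ a o) (hao : a o < 1) {θ : ℝ}
    (hθ : 0 ≤ θ) (hθ1 : θ ≤ 1) :
    ∃ h : α → Option κ, ∀ v,
      IsNearlyProportional o (fun j => a j / (1 - a o))
        (fun j => #{x ∈ s | w x = v ∧ h x = some j}) ∧
      (∀ j, (#{x ∈ s | w x = v ∧ h x = some j} : ℝ) ≤ a j * (1 - θ) * #{x ∈ s | w x = v}) ∧
      θ * #{x ∈ s | w x = v} ≤ #{x ∈ s | w x = v ∧ h x = none} ∧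
      (#{x ∈ s | w x = v ∧ h x = none} : ℝ) ≤ θ * #{x ∈ s | w x = v} + Fintype.card κ := by
  choose h hh using fun v =>
    exists_proportional_labelling ({x ∈ s | w x = v} : Finset α) ha ha1 hmax hao hθ hθ1
  refine ⟨fun x => h (w x) x, fun v => ?_⟩
  have hclass : ∀ b, ({x ∈ s | w x = v ∧ h (w x) x = b} : Finset α) =
      {x ∈ ({x ∈ s | w x = v} : Finset α) | h v x = b} := fun b => by
    rw [filter_filter]
    refine filter_congr fun x _ => ?_
    constructor <;> rintro ⟨rfl, hb⟩ <;> exact ⟨rfl, hb⟩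
  simpa only [hclass] using hh v

end ProportionalSplit

section ProportionalFill

variable {α κ : Type*} [Fintype κ] [DecidableEq κ]

lemma exists_proportional_split {o : κ} {a : κ → ℝ} (s : Finset α) (w : α → ℕ)
    (ha : ∀ j, 0 ≤ a j) (ha1 : ∑ j, a j = 1) (hmax : ∀ j, a j ≤ a o) (hao : a o < 1) {θ : ℝ}
    (hθ : 0 ≤ θ) (hθ1 : θ ≤ 1) :
    ∃ h : α → Option κ,
      (∀ v, IsNearlyProportional o (fun j => a j / (1 - a o))
        fun j => #{x ∈ s | w x = v ∧ h x = some j}) ∧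
      (∀ j, ∑ x ∈ s with h x = some j, (w x : ℝ) ≤ a j * (1 - θ) * ∑ x ∈ s, (w x : ℝ)) ∧
      (∀ v, θ * ∑ x ∈ s with w x < v, (w x : ℝ) ≤ ∑ x ∈ s with h x = none ∧ w x < v, (w x : ℝ)) ∧
      (#{x ∈ s | h x = none} : ℝ) ≤ θ * #s + Fintype.card κ * #(s.image w) := by
  obtain ⟨h, hh⟩ := exists_proportional_labelling_fiberwise s w ha ha1 hmax hao hθ hθ1
  have hclass : ∀ b v, ({x ∈ ({x ∈ s | h x = b} : Finset α) | w x = v} : Finset α) =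
      {x ∈ s | w x = v ∧ h x = b} := fun b v => by
    rw [filter_filter]
    exact filter_congr fun x _ => and_comm
  refine ⟨h, fun v => (hh v).1, fun j => ?_, fun v => ?_, ?_⟩
  · refine sum_comp_le_mul_sum_comp (φ := fun v : ℕ => (v : ℝ)) (fun v => v.cast_nonneg) fun v => ?_
    rw [hclass]
    exact (hh v).2.1 j
  · rcases hθ.eq_or_lt with rfl | hθ0
    · rw [zero_mul]
      positivity
    have := sum_comp_le_mul_sum_comp (w := w) (φ := fun u : ℕ => if u < v then (u : ℝ) else 0)
      (fun u => by positivity) (s := s) (t := {x ∈ s | h x = none}) (a := θ⁻¹) fun u => by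
        rw [hclass, le_inv_mul_iff₀ hθ0]
        exact (hh u).2.2.1
    rw [le_inv_mul_iff₀ hθ0, ← sum_filter, ← sum_filter, filter_filter] at this
    exact this
  · calc (#{x ∈ s | h x = none} : ℝ) = ∑ v ∈ s.image w, (#{x ∈ s | w x = v ∧ h x = none} : ℝ) := by
          rw [card_eq_sum_card_fiberwise fun x hx => mem_image_of_mem w (mem_filter.1 hx).1]
          simp only [hclass, Nat.cast_sum]
      _ ≤ ∑ v ∈ s.image w, (θ * #{x ∈ s | w x = v} + Fintype.card κ) :=
          sum_le_sum fun v _ => (hh v).2.2.2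
      _ = θ * #s + Fintype.card κ * #(s.image w) := by
          rw [sum_add_distrib, ← mul_sum, sum_const, nsmul_eq_mul, mul_comm (#(s.image w) : ℝ),
            card_eq_sum_card_image w s, Nat.cast_sum]

/-- A labelling `f` of `s` with prescribed load `g j` for every label `j`, such that apart from the
reserve `R` the labels are distributed inside every weight class as if a fixed proportion got the
label `o` and the rest were shared out in the proportions `r`. -/
structure IsProportionalFill [DecidableEq α] (o : κ) (r : κ → ℝ) (w : α → ℕ) (s R : Finset α)
    (g : κ → ℕ) (f : α → κ) : Prop where
  nonneg : ∀ j, 0 ≤ r j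
  sum_eq_one : ∑ j ∈ univ.erase o, r j = 1
  reserve_subset : R ⊆ s
  load : ∀ j, ∑ x ∈ s with f x = j, w x = g j
  isNearlyProportional : ∀ v, IsNearlyProportional o r fun j => #{x ∈ s \ R | w x = v ∧ f x = j}

variable [DecidableEq α] {o : κ}

lemma IsProportionalFill.union {r : κ → ℝ} {w : α → ℕ} {s t R R' : Finset α} {g g' : κ → ℕ}
    {f f' : α → κ} (h : IsProportionalFill o r w s R g f) (hst : Disjoint s t) (hR' : R' ⊆ t)
    (hload : ∀ j, ∑ x ∈ t with f' x = j, w x = g' j) (ho : ∀ x ∈ t \ R', f' x = o) :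
    IsProportionalFill o r w (s ∪ t) (R ∪ R') (g + g') (s.piecewise f f') where
  nonneg := h.nonneg
  sum_eq_one := h.sum_eq_one
  reserve_subset := union_subset_union h.reserve_subset hR'
  load j := by
    simp only [sum_filter, sum_union hst, Pi.add_apply, ← h.load j, ← hload j]
    congr 1
    · exact sum_congr rfl fun x hx => by rw [piecewise_eq_of_mem _ _ _ hx]
    · exact sum_congr rfl fun x hx => by
        rw [piecewise_eq_of_notMem _ _ _ (disjoint_right.1 hst hx)]
  isNearlyProportional v := by
    refine (h.isNearlyProportional v).of_le (card_le_card fun x hx => ?_) fun j hj => ?_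
    · have hxs := (mem_sdiff.1 (mem_filter.1 hx).1).1
      have hxR' := notMem_mono hR' (disjoint_left.1 hst hxs)
      simp_all
    · congr 1
      ext x
      by_cases hxs : x ∈ s
      · have hxR' := notMem_mono hR' (disjoint_left.1 hst hxs)
        simp [hxs, hxR']
      · have := notMem_mono h.reserve_subset hxs
        have := ho x
        simp only [mem_filter, mem_sdiff, mem_union, piecewise_eq_of_notMem _ _ _ hxs]
        grind

lemma IsProportionalFill.union_const {r : κ → ℝ} {w : α → ℕ} {s t R : Finset α} {g : κ → ℕ}
    {f : α → κ} (h : IsProportionalFill o r w s R g f) (hst : Disjoint s t) :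
    IsProportionalFill o r w (s ∪ t) R (g + Pi.single o (∑ x ∈ t, w x))
      (s.piecewise f fun _ => o) := by
  rw [← union_empty R]
  refine h.union hst (empty_subset t) (fun j => ?_) fun _ _ => rfl
  rcases eq_or_ne j o with rfl | hj
  · simp
  · simp [hj, hj.symm]

lemma exists_isProportionalFill_of_dvd {a : κ → ℝ} (w : α → ℕ) (s : Finset α) (g : κ → ℕ) {u : ℕ}
    {θ : ℝ} (hθ : 0 ≤ θ) (hθ1 : θ ≤ 1) (ha : ∀ j, 0 ≤ a j) (ha1 : ∑ j, a j = 1)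
    (hmax : ∀ j, a j ≤ a o) (hao : a o < 1) (hsum : ∑ x ∈ s, w x = ∑ j, g j)
    (hroom : ∀ j, a j * (1 - θ) * ∑ x ∈ s, (w x : ℝ) ≤ g j) (hw : ∀ x ∈ s, u ∣ w x)
    (hg : ∀ j, u ∣ g j)
    (hdom : ∀ x ∈ s, Fintype.card κ * w x ≤ θ * ∑ y ∈ s with w y < w x, (w y : ℝ) ∨ w x = u) :
    ∃ f R, IsProportionalFill o (fun j => a j / (1 - a o)) w s R g f ∧
      (#R : ℝ) ≤ θ * #s + Fintype.card κ * #(s.image w) := by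
  obtain ⟨h, hprop, hload, hreserve, hcard⟩ :=
    exists_proportional_split s w ha ha1 hmax hao hθ hθ1
  have : Nonempty κ := ⟨o⟩
  obtain ⟨f, hext, hf⟩ := exists_exact_extension (u := u) w s h g hsum
    (fun j => by exact_mod_cast (hload j).trans (hroom j))
    (fun x hx _ => hw x hx) hg (fun j => dvd_sum fun x hx => hw x (mem_filter.1 hx).1)
    (fun x hx _ => (hdom x hx).imp_left fun hle => by exact_mod_cast hle.trans (hreserve _))
  refine ⟨f, {x ∈ s | h x = none}, ⟨fun j => ?_, ?_, filter_subset _ _, hf, fun v => ?_⟩, hcard⟩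
  · exact div_nonneg (ha j) (sub_nonneg.2 hao.le)
  · have := add_sum_erase univ a (mem_univ o)
    rw [← sum_div, div_eq_one_iff_eq (sub_pos.2 hao).ne']
    linarith
  · convert hprop v using 3
    ext x
    have := hext x
    rcases hx : h x with _ | k <;> simp_all

lemma exists_isProportionalFill_of_le (w : α → ℕ) (s : Finset α) {g g' : κ → ℕ} {u : ℕ} {θ : ℝ}
    (hθ : 0 ≤ θ) (hθ1 : θ ≤ 1) (hmax : ∀ j, g j ≤ g o) (hlt : g o < ∑ j, g j)
    (hle : ∀ j, g' j ≤ g j) (hroom : ∀ j, (1 - θ) * g j ≤ g' j) (hsum : ∑ x ∈ s, w x = ∑ j, g' j)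
    (hw : ∀ x ∈ s, u ∣ w x) (hg' : ∀ j, u ∣ g' j)
    (hdom : ∀ x ∈ s, Fintype.card κ * w x ≤ θ * ∑ y ∈ s with w y < w x, (w y : ℝ) ∨ w x = u) :
    ∃ r f R, IsProportionalFill o r w s R g' f ∧
      (#R : ℝ) ≤ θ * #s + Fintype.card κ * #(s.image w) := by
  have hG0 : (0 : ℝ) < (∑ j, g j : ℕ) := by exact_mod_cast (Nat.zero_le _).trans_lt hlt
  refine ⟨_, exists_isProportionalFill_of_dvd (a := fun j => (g j : ℝ) / (∑ j, g j : ℕ)) w s g'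
    hθ hθ1 (fun j => by positivity) ?_ (fun j => by gcongr; exact hmax j)
    ((div_lt_one hG0).2 (by exact_mod_cast hlt)) hsum (fun j => ?_) hw hg' hdom⟩
  · rw [← sum_div, ← Nat.cast_sum, div_self hG0.ne']
  · calc (g j : ℝ) / (∑ j, g j : ℕ) * (1 - θ) * ∑ x ∈ s, (w x : ℝ)
        ≤ g j / (∑ j, g j : ℕ) * (1 - θ) * (∑ j, g j : ℕ) := by
          have := sub_nonneg.2 hθ1
          gcongr
          exact_mod_cast hsum.trans_le (sum_le_sum fun j _ => hle j)
      _ = (1 - θ) * g j := by field_simp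
      _ ≤ g' j := hroom j

omit [Fintype κ] in
lemma exists_add_single_eq (g : κ → ℕ) {u L : ℕ} {θ : ℝ} (hθ : 0 ≤ θ) (hθ1 : θ ≤ 1)
    (hg : ∀ j, u ∣ g j) (hu : u ∣ L) (hL : L ≤ θ * g o) :
    ∃ g' : κ → ℕ, g' + Pi.single o L = g ∧ (∀ j, (1 - θ) * g j ≤ g' j) ∧ ∀ j, u ∣ g' j := by
  have hLg : Pi.single o L ≤ g := fun j => by
    rcases eq_or_ne j o with rfl | hj
    · rw [Pi.single_eq_same]
      exact_mod_cast hL.trans (mul_le_of_le_one_left (Nat.cast_nonneg _) hθ1)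
    · simp [hj]
  refine ⟨g - Pi.single o L, tsub_add_cancel_of_le hLg, fun j => ?_, fun j => ?_⟩
  · rw [Pi.sub_apply, Nat.cast_sub (hLg j)]
    rcases eq_or_ne j o with rfl | hj
    · rw [Pi.single_eq_same]
      linarith
    · rw [Pi.single_eq_of_ne hj, Nat.cast_zero, sub_zero]
      exact mul_le_of_le_one_left (Nat.cast_nonneg _) (sub_le_self 1 hθ)
  · refine Nat.dvd_sub (hg j) ?_
    rcases eq_or_ne j o with rfl | hj
    · rwa [Pi.single_eq_same]
    · simp [hj]

/-- The elements lighter than the unit `u` all get the label `o`, which has a share `θ * g o` to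
spare for them once the other elements are placed. -/
lemma exists_isProportionalFill_of_light (w : α → ℕ) (s : Finset α) (g : κ → ℕ) {u : ℕ} {θ : ℝ}
    (hθ : 0 ≤ θ) (hθ1 : θ ≤ 1) (hsum : ∑ x ∈ s, w x = ∑ j, g j) (hmax : ∀ j, g j ≤ g o)
    (hlt : g o < ∑ j, g j) (hg : ∀ j, u ∣ g j) (hw : ∀ x ∈ s, u ≤ w x → u ∣ w x)
    (hlight : ∑ x ∈ s with w x < u, (w x : ℝ) ≤ θ * g o)
    (hdom : ∀ x ∈ s, u < w x →
      Fintype.card κ * w x ≤ θ * ∑ y ∈ s with u ≤ w y ∧ w y < w x, (w y : ℝ)) :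
    ∃ r f R, IsProportionalFill o r w s R g f ∧ (∀ x ∈ s, w x < u → f x = o) ∧
      (#R : ℝ) ≤ θ * #s + Fintype.card κ * #(({x ∈ s | u ≤ w x} : Finset α).image w) := by
  set m : Finset α := {x ∈ s | u ≤ w x} with hm
  set light : Finset α := {x ∈ s | ¬ u ≤ w x} with hlight_def
  set L : ℕ := ∑ x ∈ light, w x with hL
  have hunion : m ∪ light = s := filter_union_filter_not_eq _ s
  have hsplit : ∑ x ∈ m, w x + L = ∑ x ∈ s, w x := sum_filter_add_sum_filter_not s _ w
  have hmdvd : ∀ x ∈ m, u ∣ w x := fun x hx => hw x (mem_filter.1 hx).1 (mem_filter.1 hx).2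
  have hLdvd : u ∣ L := by
    rw [← Nat.dvd_add_right (dvd_sum hmdvd), hsplit, hsum]
    exact dvd_sum fun j _ => hg j
  obtain ⟨g', hg'g, hroom, hg'⟩ := exists_add_single_eq g (o := o) (L := L) hθ hθ1 hg hLdvd
    (by simpa [hL, hlight_def] using hlight)
  have hsum' : ∑ x ∈ m, w x = ∑ j, g' j := by
    simp only [← hg'g, Pi.add_apply, sum_add_distrib, sum_pi_single', mem_univ, if_pos] at hsum
    lia
  obtain ⟨r, f, R, hf, hcard⟩ := exists_isProportionalFill_of_le w m hθ hθ1 hmax hlt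
    (fun j => hg'g ▸ Nat.le_add_right _ _) hroom hsum' hmdvd hg' fun x hx => by
      rw [hm, filter_filter]
      exact (mem_filter.1 hx).2.lt_or_eq'.imp_left (hdom x (mem_filter.1 hx).1)
  refine ⟨r, m.piecewise f fun _ => o, R, ?_, fun x _ hxu => ?_, ?_⟩
  · have := hf.union_const (disjoint_filter_filter_not s s _ : Disjoint m light)
    rwa [hunion, hg'g] at this
  · exact piecewise_eq_of_notMem _ _ _ fun h => hxu.not_ge (mem_filter.1 h).2
  · refine hcard.trans ?_
    gcongr
    exact filter_subset _ _

end ProportionalFill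

section PowerWeights

variable {α κ : Type*}

lemma sum_filter_lt_pow_succ {d : ℕ} (hd : 2 ≤ d) (w : α → ℕ) {s : Finset α}
    (hw : ∀ x ∈ s, w x = 0 ∨ ∃ e, w x = d ^ e) (φ : α → ℕ) (i : ℕ) :
    ∑ x ∈ s with w x < d ^ (i + 1), φ x =
      ∑ x ∈ s with w x < d ^ i, φ x + ∑ x ∈ s with w x = d ^ i, φ x := by
  simp only [sum_filter, ← sum_add_distrib]
  refine sum_congr rfl fun x hx => ?_
  have hpos : ∀ e, 0 < d ^ e := fun e => pow_pos (by lia) e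
  rcases hw x hx with h | ⟨e, h⟩
  · simp [h, hpos, (hpos i).ne]
  · simp only [h, Nat.pow_lt_pow_iff_right (show 1 < d by lia),
      (Nat.pow_right_injective hd).eq_iff]
    split_ifs <;> lia

/-- Raising `i` by one divides the ratio of the total weight below `d ^ i` to `d ^ i` by `d`, unless
new elements make up for it: it takes `K` of them to keep the ratio above `K`. -/
lemma mul_le_card_of_lt_sum_filter {d K t : ℕ} (hd : 2 ≤ d) {s : Finset α} (w : α → ℕ)
    (hw : ∀ x ∈ s, w x = 0 ∨ ∃ e, w x = d ^ e) (ht : ∑ x ∈ s with w x < d ^ t, w x ≤ K * d ^ t)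
    {k : ℕ} (hlt : ∀ i ∈ Ioc t (t + k), K * d ^ i < ∑ x ∈ s with w x < d ^ i, w x) :
    k * K ≤ #s := by
  have hpos : ∀ i, 0 < d ^ i := fun i => pow_pos (by lia) i
  have hpotential : k * K * d ^ (t + k) + ∑ x ∈ s with w x < d ^ (t + k), w x ≤
      (K + #{x ∈ s | w x < d ^ (t + k)}) * d ^ (t + k) := by
    induction k with
    | zero => simpa using ht.trans (Nat.mul_le_mul_right _ (Nat.le_add_right _ _))
    | succ k ih =>
      have ih := ih fun i hi => hlt i (Ioc_subset_Ioc_right (by lia) hi)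
      have hbig := hlt (t + (k + 1)) (mem_Ioc.2 ⟨by lia, le_rfl⟩)
      have hclass : ∑ x ∈ s with w x = d ^ (t + k), w x =
          #{x ∈ s | w x = d ^ (t + k)} * d ^ (t + k) := by
        rw [← smul_eq_mul, ← sum_const]
        exact sum_congr rfl fun x hx => (mem_filter.1 hx).2
      simp only [card_eq_sum_ones] at ih hclass ⊢
      rw [← add_assoc, sum_filter_lt_pow_succ hd w hw, hclass] at hbig ⊢
      rw [sum_filter_lt_pow_succ hd w hw]
      rw [pow_succ] at hbig ⊢
      generalize ∑ x ∈ s with w x = d ^ (t + k), 1 = m at hbig ⊢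
      generalize ∑ x ∈ s with w x < d ^ (t + k), w x = M at hbig ih ⊢
      have hdouble := Nat.mul_le_mul_left (M + m * d ^ (t + k)) hd
      have := Nat.mul_le_mul_right d ih
      linarith
  rcases k.eq_zero_or_pos with rfl | hk
  · simp
  · have hbig := hlt (t + k) (mem_Ioc.2 ⟨by lia, le_rfl⟩)
    refine le_trans ?_ (card_filter_le s fun x => w x < d ^ (t + k))
    refine Nat.le_of_mul_le_mul_right ?_ (hpos (t + k))
    lia

lemma card_image_filter_pow_le {d t k : ℕ} (hd : 2 ≤ d) (s : Finset α) (w : α → ℕ)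
    (hw : ∀ x ∈ s, w x = 0 ∨ ∃ e < t + k, w x = d ^ e) :
    #(({x ∈ s | d ^ t ≤ w x} : Finset α).image w) ≤ k := by
  have hsub : ({x ∈ s | d ^ t ≤ w x} : Finset α).image w ⊆
      (range k).image fun i => d ^ (t + i) := by
    simp only [subset_iff, mem_image, mem_filter, mem_range]
    rintro _ ⟨x, ⟨hxs, hx⟩, rfl⟩
    rcases hw x hxs with h0 | ⟨e, he, h⟩
    · exact absurd (h0 ▸ hx) (pow_pos (by lia) t).not_ge
    · rw [h, Nat.pow_le_pow_iff_right (by lia)] at hx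
      exact ⟨e - t, by lia, by rw [h, Nat.add_sub_cancel' hx]⟩
  exact (card_le_card hsub).trans (card_image_le.trans_eq (card_range k))

lemma exists_threshold {d τ : ℕ} (K : ℕ) (hd : 2 ≤ d) (s : Finset α) (w : α → ℕ)
    (hw : ∀ x ∈ s, w x = 0 ∨ ∃ e < τ, w x = d ^ e) :
    ∃ t ≤ τ, ∑ x ∈ s with w x < d ^ t, w x ≤ K * d ^ t ∧
      (∀ i ∈ Ioc t τ, K * d ^ i < ∑ x ∈ s with w x < d ^ i, w x) ∧
      #(({x ∈ s | d ^ t ≤ w x} : Finset α).image w) * K ≤ #s := by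
  have hw' : ∀ x ∈ s, w x = 0 ∨ ∃ e, w x = d ^ e := fun x hx =>
    (hw x hx).imp_right fun ⟨e, _, he⟩ => ⟨e, he⟩
  let P (i : ℕ) : Prop := ∑ x ∈ s with w x < d ^ i, w x ≤ K * d ^ i
  have hP0 : P 0 := by
    have : ∑ x ∈ s with w x < d ^ 0, w x = 0 := sum_eq_zero fun x hx => by
      simpa using (mem_filter.1 hx).2
    exact this.trans_le (Nat.zero_le _)
  have hlt : ∀ i ∈ Ioc (Nat.findGreatest P τ) τ, K * d ^ i < ∑ x ∈ s with w x < d ^ i, w x :=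
    fun i hi => not_le.1 (Nat.findGreatest_is_greatest (P := P) (mem_Ioc.1 hi).1 (mem_Ioc.1 hi).2)
  have hspec := Nat.findGreatest_spec (Nat.zero_le τ) hP0
  refine ⟨_, Nat.findGreatest_le τ, hspec, hlt, ?_⟩
  obtain ⟨k, hk⟩ := Nat.exists_eq_add_of_le (Nat.findGreatest_le (P := P) τ)
  refine (Nat.mul_le_mul_right K (card_image_filter_pow_le hd s w (hk ▸ hw))).trans ?_
  exact mul_le_card_of_lt_sum_filter hd w hw' hspec (hk ▸ hlt)

lemma mul_pow_le_mul_sum_filter {d K t e : ℕ} {c θ : ℝ} (hd : 2 ≤ d) (hθ : 0 ≤ θ)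
    (s : Finset α) (w : α → ℕ) (hK : 2 * c ≤ θ * K) (hte : t < e)
    (ht : ∑ x ∈ s with w x < d ^ t, w x ≤ K * d ^ t)
    (he : K * d ^ e < ∑ x ∈ s with w x < d ^ e, w x) :
    c * (d ^ e : ℕ) ≤ θ * ∑ x ∈ s with d ^ t ≤ w x ∧ w x < d ^ e, (w x : ℝ) := by
  have hpow : 2 * d ^ t ≤ d ^ e := by
    calc 2 * d ^ t ≤ d * d ^ t := Nat.mul_le_mul_right _ hd
      _ = d ^ (t + 1) := (pow_succ' d t).symm
      _ ≤ d ^ e := Nat.pow_le_pow_right (by lia) hte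
  have hsplit : ∑ x ∈ s with w x < d ^ e, w x =
      ∑ x ∈ s with d ^ t ≤ w x ∧ w x < d ^ e, w x + ∑ x ∈ s with w x < d ^ t, w x := by
    rw [← sum_filter_add_sum_filter_not _ (d ^ t ≤ w ·), filter_filter, filter_filter]
    congr 2 <;> refine filter_congr fun x _ => ?_ <;> lia
  have hhalf : (K : ℝ) * (d ^ e : ℕ) ≤
      2 * ∑ x ∈ s with d ^ t ≤ w x ∧ w x < d ^ e, (w x : ℝ) := by
    have := Nat.mul_le_mul_left K hpow
    exact_mod_cast (by linarith : K * d ^ e ≤ 2 * ∑ x ∈ s with d ^ t ≤ w x ∧ w x < d ^ e, w x)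
  have h1 := mul_le_mul_of_nonneg_left hhalf hθ
  have h2 := mul_le_mul_of_nonneg_right hK (d ^ e).cast_nonneg
  linarith

lemma exists_isProportionalFill_of_pow [Fintype κ] [DecidableEq κ] [DecidableEq α] {d τ K : ℕ}
    {θ : ℝ} {o : κ} (hd : 2 ≤ d) (w : α → ℕ) (s : Finset α) (g : κ → ℕ) (hθ : 0 ≤ θ) (hθ1 : θ ≤ 1)
    (hw : ∀ x ∈ s, w x = 0 ∨ ∃ e < τ, w x = d ^ e) (hsum : ∑ x ∈ s, w x = ∑ j, g j)
    (hmax : ∀ j, g j ≤ g o) (hlt : g o < ∑ j, g j) (hg : ∀ j, d ^ τ ∣ g j)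
    (hK : 2 * Fintype.card κ ≤ θ * K) (ho : K * d ^ τ ≤ θ * g o) :
    ∃ r f R, IsProportionalFill o r w s R g f ∧ #R ≤ 2 * θ * #s ∧
      #(({x ∈ s | f x ≠ o} : Finset α).image w) ≤ θ * #s := by
  obtain ⟨t, htτ, ht, hbig, hclasses⟩ := exists_threshold K hd s w hw
  obtain ⟨r, f, R, hf, hlight, hcard⟩ := exists_isProportionalFill_of_light (u := d ^ t) w s g hθ
    hθ1 hsum hmax hlt (fun j => (pow_dvd_pow d htτ).trans (hg j))
    (fun x hx hxt => by
      rcases hw x hx with h | ⟨e, -, he⟩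
      · exact h ▸ dvd_zero _
      · rw [he, Nat.pow_le_pow_iff_right (by lia)] at hxt
        exact he ▸ pow_dvd_pow d hxt)
    (by
      refine le_trans ?_ ho
      exact_mod_cast ht.trans (Nat.mul_le_mul_left K (Nat.pow_le_pow_right (by lia) htτ)))
    (fun x hx hxt => by
      rcases hw x hx with h | ⟨e, heτ, he⟩
      · lia
      · rw [he, Nat.pow_lt_pow_iff_right (by lia)] at hxt
        rw [he]
        exact mul_pow_le_mul_sum_filter hd hθ s w hK hxt ht (hbig e (mem_Ioc.2 ⟨hxt, heτ.le⟩)))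
  set C := #(({x ∈ s | d ^ t ≤ w x} : Finset α).image w)
  have hcost : 2 * Fintype.card κ * C ≤ θ * #s := by
    calc 2 * Fintype.card κ * C ≤ θ * K * C := mul_le_mul_of_nonneg_right hK C.cast_nonneg
      _ = θ * (C * K : ℕ) := by push_cast; ring
      _ ≤ θ * #s := by gcongr
  refine ⟨r, f, R, hf, ?_, ?_⟩
  · have : 0 ≤ Fintype.card κ * (C : ℝ) := by positivity
    linarith
  · have hκ : (1 : ℝ) ≤ Fintype.card κ := by exact_mod_cast Fintype.card_pos_iff.2 ⟨o⟩
    have hmixed : #(({x ∈ s | f x ≠ o} : Finset α).image w) ≤ C :=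
      card_le_card (image_subset_image fun x hx => by
        rw [mem_filter] at hx ⊢
        exact ⟨hx.1, not_lt.1 fun h => hx.2 (hlight x hx.1 h)⟩)
    have hmixed' : (#(({x ∈ s | f x ≠ o} : Finset α).image w) : ℝ) ≤ C := by exact_mod_cast hmixed
    nlinarith [(C.cast_nonneg : (0 : ℝ) ≤ C)]

end PowerWeights

section EquitableFill

variable {α κ : Type*} [Fintype α] [DecidableEq α] [Fintype κ] [DecidableEq κ] {o : κ}

lemma exists_isProportionalFill_of_full [Nontrivial κ] (w : α → ℕ) (P : Finset α) {T : ℕ}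
    (f : α → κ) (hsum : ∑ x, w x = Fintype.card κ * T)
    (hfull : ∀ j ≠ o, ∑ x ∈ P with f x = j, w x = T) :
    ∃ r f, IsProportionalFill o r w univ P (fun _ => T) f ∧ ∀ x ∉ P, f x = o := by
  obtain ⟨k, hk⟩ := exists_ne o
  have hempty : IsProportionalFill o (Pi.single k 1) w ∅ ∅ 0 f :=
    { nonneg := (Pi.single_nonneg (α := fun _ : κ => ℝ)).2 zero_le_one
      sum_eq_one := by rw [sum_pi_single', if_pos (mem_erase.2 ⟨hk, mem_univ k⟩)]
      reserve_subset := Subset.rfl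
      load := fun j => by simp
      isNearlyProportional := fun v => .of_eq_zero _ fun j _ => by simp }
  have hload : ∀ j ≠ o, ∑ x with P.piecewise f (fun _ => o) x = j, w x = T := fun j hj => by
    rw [← hfull j hj]
    congr 1
    ext x
    by_cases hx : x ∈ P <;> simp [hx, hj.symm]
  have hload_o : ∑ x with P.piecewise f (fun _ => o) x = o, w x = T := by
    have := sum_fiberwise univ (P.piecewise f fun _ => o) w
    rw [hsum, ← add_sum_erase _ _ (mem_univ o),
      sum_congr rfl fun j hj => hload j (ne_of_mem_erase hj), sum_const,
      card_erase_of_mem (mem_univ o), card_univ, smul_eq_mul, Nat.sub_mul, one_mul] at this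
    have := Nat.le_mul_of_pos_left T (Fintype.card_pos (α := κ))
    lia
  have hload_all : ∀ j, ∑ x with P.piecewise f (fun _ => o) x = j, w x = T := fun j => by
    rcases eq_or_ne j o with rfl | hj
    exacts [hload_o, hload j hj]
  refine ⟨Pi.single k 1, P.piecewise f fun _ => o, ?_, fun x hx => piecewise_eq_of_notMem _ _ _ hx⟩
  simpa [Pi.add_def] using hempty.union (disjoint_empty_left univ) (subset_univ P) hload_all
    fun x hx => piecewise_eq_of_notMem _ _ _ (mem_sdiff.1 hx).2

lemma exists_isProportionalFill_of_not_full {d τ V K : ℕ} {θ : ℝ} (hd : 2 ≤ d) (hθ : 0 ≤ θ)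
    (hθ1 : θ ≤ 1) (hK : 2 * Fintype.card κ ≤ θ * K) (hV : K ≤ θ * d ^ V) (w : α → ℕ)
    (P : Finset α) (hw : ∀ x ∉ P, w x = 0 ∨ ∃ e < τ, w x = d ^ e) (hP : ∀ x ∈ P, d ^ τ ∣ w x)
    (f : α → κ) (hsum : ∑ x, w x = Fintype.card κ * d ^ (τ + V))
    (hle : ∀ j ≠ o, ∑ x ∈ P with f x = j, w x ≤ d ^ (τ + V)) (ho : ∀ x ∈ P, f x ≠ o)
    (hfull : ¬ ∀ j ≠ o, ∑ x ∈ P with f x = j, w x = d ^ (τ + V)) :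
    ∃ r f R, IsProportionalFill o r w univ R (fun _ => d ^ (τ + V)) f ∧
      #R ≤ #P + 2 * θ * Fintype.card α ∧
      #(({x ∈ Rᶜ | f x ≠ o} : Finset α).image w) ≤ θ * Fintype.card α := by
  set T := d ^ (τ + V) with hT
  set load : κ → ℕ := fun j => ∑ x ∈ P with f x = j, w x
  have hload_o : load o = 0 := (congrArg (∑ x ∈ ·, w x) (filter_false_of_mem ho)).trans sum_empty
  have hload_le : ∀ j, load j ≤ T := fun j => by
    rcases eq_or_ne j o with rfl | hj
    exacts [hload_o ▸ Nat.zero_le T, hle j hj]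
  have hsum' : ∑ x ∈ Pᶜ, w x = ∑ j, (T - load j) := by
    rw [sum_tsub_distrib _ fun j _ => hload_le j, sum_const, card_univ, smul_eq_mul, ← hsum,
      ← sum_add_sum_compl P w, ← sum_fiberwise P f w, Nat.add_sub_cancel_left]
  have hlt : T - load o < ∑ j, (T - load j) := by
    push Not at hfull
    obtain ⟨j, hj, hjT⟩ := hfull
    exact single_lt_sum (f := fun j => T - load j) hj (mem_univ o) (mem_univ j)
      (Nat.sub_pos_of_lt ((hle j hj).lt_of_ne hjT)) fun _ _ _ => Nat.zero_le _
  have hroom : K * (d : ℝ) ^ τ ≤ θ * (T - load o : ℕ) := by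
    have := mul_le_mul_of_nonneg_left hV (pow_nonneg (d.cast_nonneg (α := ℝ)) τ)
    rw [hload_o, Nat.sub_zero, hT, pow_add]
    push_cast
    linarith
  obtain ⟨r, fL, R, hfL, hR, hmixed⟩ := exists_isProportionalFill_of_pow (τ := τ) hd w Pᶜ
    (fun j => T - load j) hθ hθ1 (fun x hx => hw x (mem_compl.1 hx)) hsum'
    (fun j => by lia) hlt (fun j => Nat.dvd_sub (pow_dvd_pow d (Nat.le_add_right τ V))
      (dvd_sum fun x hx => hP x (mem_filter.1 hx).1)) hK hroom
  have hPc : (#Pᶜ : ℝ) ≤ Fintype.card α := by exact_mod_cast card_le_univ _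
  refine ⟨r, Pᶜ.piecewise fL f, R ∪ P, ?_, ?_, ?_⟩
  · convert hfL.union (t := P) (g' := load) (f' := f) disjoint_compl_left Subset.rfl
      (fun _ => rfl) (by simp) using 1
    · rw [union_comm, union_compl]
    · exact funext fun j => (Nat.sub_add_cancel (hload_le j)).symm
  · have hunion : (#(R ∪ P) : ℝ) ≤ #R + #P := by exact_mod_cast card_union_le R P
    nlinarith
  · refine le_trans ?_ (hmixed.trans (mul_le_mul_of_nonneg_left hPc hθ))
    refine mod_cast card_le_card (image_subset_image fun x hx => ?_)
    simp only [mem_filter, mem_compl, mem_union, not_or] at hx ⊢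
    exact ⟨hx.1.2, by simpa [hx.1.2] using hx.2⟩

omit [DecidableEq α] in
lemma card_filter_pow_le_le_of_sum_le {d a b : ℕ} (hd : 2 ≤ d) (w : α → ℕ)
    (hsum : ∑ x, w x ≤ d ^ (a + b)) : #{x | d ^ a ≤ w x} ≤ d ^ b := by
  refine Nat.le_of_mul_le_mul_right ?_ (Nat.pow_pos (n := a) (zero_lt_two.trans_le hd))
  calc #{x | d ^ a ≤ w x} * d ^ a ≤ ∑ x with d ^ a ≤ w x, w x :=
        card_nsmul_le_sum _ _ _ fun x hx => (mem_filter.1 hx).2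
    _ ≤ ∑ x, w x := sum_le_univ_sum_of_nonneg fun _ => Nat.zero_le _
    _ ≤ d ^ b * d ^ a := by rwa [← pow_add, add_comm b a]

lemma exists_isProportionalFill_univ {d τ V K : ℕ} {θ : ℝ} (hd : 2 ≤ d) (hθ : 0 ≤ θ) (hθ1 : θ ≤ 1)
    (hK : 2 * d ≤ θ * K) (hV : K ≤ θ * d ^ V) (w : α → ℕ)
    (hw : ∀ x, w x = 0 ∨ ∃ e ≤ τ + V, w x = d ^ e) (hsum : ∑ x, w x = d ^ (τ + V + 1))
    (hκ : Fintype.card κ = d) (o : κ) :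
    ∃ r f R, IsProportionalFill o r w univ R (fun _ => d ^ (τ + V)) f ∧
      #R ≤ (d ^ (V + 1) : ℕ) + 2 * θ * Fintype.card α ∧
      #(({x ∈ Rᶜ | f x ≠ o} : Finset α).image w) ≤ θ * Fintype.card α := by
  subst hκ
  set d := Fintype.card κ
  have : Nontrivial κ := Fintype.one_lt_card_iff_nontrivial.1 hd
  set P : Finset α := {x | d ^ τ ≤ w x} with hP
  have hPcard : (#P : ℝ) ≤ (d ^ (V + 1) : ℕ) := by
    exact_mod_cast card_filter_pow_le_le_of_sum_le hd w (hsum.trans_le (by rw [add_assoc]))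
  have hheavy : ∀ x ∈ P, ∃ e, τ ≤ e ∧ e ≤ τ + V ∧ w x = d ^ e := fun x hx => by
    have hx := (mem_filter.1 hx).2
    obtain ⟨e, he, hwx⟩ := (hw x).resolve_left
      ((Nat.pow_pos (zero_lt_two.trans_le hd)).trans_le hx).ne'
    exact ⟨e, (Nat.pow_le_pow_iff_right hd).1 (hwx ▸ hx), he, hwx⟩
  have hlight : ∀ x ∉ P, w x = 0 ∨ ∃ e < τ, w x = d ^ e := fun x hx =>
    (hw x).imp_right fun ⟨e, _, hwx⟩ => ⟨e, (Nat.pow_lt_pow_iff_right hd).1 <| by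
      simpa [hP, hwx] using hx, hwx⟩
  obtain ⟨f, hle, hf⟩ := exists_greedy_fill o w (d ^ (τ + V)) P
    (fun x hx y hy hxy => by
      obtain ⟨e, -, -, he⟩ := hheavy x hx
      obtain ⟨e', -, -, he'⟩ := hheavy y hy
      rw [he, he'] at hxy ⊢
      exact pow_dvd_pow d ((Nat.pow_le_pow_iff_right hd).1 hxy))
    fun x hx => by
      obtain ⟨e, -, he, hwx⟩ := hheavy x hx
      exact hwx ▸ pow_dvd_pow d he
  rw [pow_succ'] at hsum
  by_cases hfull : ∀ j ≠ o, ∑ x ∈ P with f x = j, w x = d ^ (τ + V)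
  · obtain ⟨r, f', hf', ho⟩ := exists_isProportionalFill_of_full w P f hsum hfull
    refine ⟨r, f', P, hf', hPcard.trans (le_add_of_nonneg_right (by positivity)), ?_⟩
    rw [filter_false_of_mem fun x hx => not_not.2 (ho x (mem_compl.1 hx)), image_empty, card_empty,
      Nat.cast_zero]
    positivity
  · obtain ⟨r, f', R, hf', hR, hmixed⟩ := exists_isProportionalFill_of_not_full hd hθ hθ1 hK hV w P
      hlight (fun x hx => by
        obtain ⟨e, he, -, hwx⟩ := hheavy x hx
        exact hwx ▸ pow_dvd_pow d he) f hsum hle (hf.resolve_left hfull) hfull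
    exact ⟨r, f', R, hf', hR.trans (by gcongr), hmixed⟩

end EquitableFill

section Assembly

lemma pow_sum_le_multinomial_mul_prod_biasedWeights {κ : Type*} [Fintype κ] [DecidableEq κ] {o : κ}
    {p : ℝ} (r : κ → ℝ) {c : κ → ℕ} (hp : 0 ≤ p) (hc : ∀ j ≠ o, c j = 0) :
    p ^ (∑ j, c j) ≤ Nat.multinomial univ c * ∏ j, biasedWeights o p r j ^ c j := by
  rw [sum_eq_single_of_mem o (mem_univ o) fun j _ hj => hc j hj,
    prod_eq_single_of_mem o (mem_univ o) fun j _ hj => by rw [hc j hj, pow_zero], biasedWeights,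
    if_pos rfl]
  exact le_mul_of_one_le_left (pow_nonneg hp _) (mod_cast Nat.multinomial_pos univ c)

lemma IsProportionalFill.pow_card_le {α κ : Type*} [Fintype α] [DecidableEq α] [Fintype κ]
    [DecidableEq κ] {o : κ} {r : κ → ℝ} {w : α → ℕ} {R : Finset α} {g : κ → ℕ} {f : α → κ}
    (h : IsProportionalFill o r w univ R g f) (hκ : 2 ≤ Fintype.card κ) :
    criticalBias (Fintype.card κ) ^ #Rᶜ ≤
      (∏ v ∈ ({x ∈ Rᶜ | f x ≠ o} : Finset α).image w,
        (Real.exp 1 * (#{x | w x = v} + 1 : ℕ)) ^ Fintype.card κ) *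
      ((∏ v ∈ univ.image w, (Nat.multinomial univ fun j => #{x ∈ Rᶜ | w x = v ∧ f x = j} : ℝ)) *
        ∏ x ∈ Rᶜ, biasedWeights o (criticalBias (Fintype.card κ)) r (f x)) := by
  set p := criticalBias (Fintype.card κ)
  have hp0 : 0 ≤ p := (criticalBias_pos hκ).le
  have hq : ∀ j, 0 ≤ biasedWeights o p r j :=
    biasedWeights_nonneg hp0 (criticalBias_lt_one hκ).le h.nonneg
  set mixed := ({x ∈ Rᶜ | f x ≠ o} : Finset α).image w
  set count : ℕ → κ → ℕ := fun v j => #{x ∈ Rᶜ | w x = v ∧ f x = j}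
  have hcount : ∀ v, ∑ j, count v j = #{x ∈ Rᶜ | w x = v} := fun v => by
    rw [card_eq_sum_card_fiberwise (t := univ) (f := f) fun _ _ => mem_univ _]
    simp only [count, filter_filter]
  have hclass : ∀ v, p ^ (∑ j, count v j) ≤
      (if v ∈ mixed then (Real.exp 1 * (#{x | w x = v} + 1 : ℕ)) ^ Fintype.card κ else 1) *
        (Nat.multinomial univ (count v) * ∏ j, biasedWeights o p r j ^ count v j) := fun v => by
    split_ifs with hv
    · have hcard : ∑ j, count v j ≤ #{x | w x = v} :=
        (hcount v).trans_le (card_le_card (filter_subset_filter _ (subset_univ _)))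
      have hnear : IsNearlyProportional o r (count v) := by
        simpa only [count, compl_eq_univ_sdiff] using h.isNearlyProportional v
      refine (hnear.criticalBias_pow_le hκ h.nonneg h.sum_eq_one).trans
        (mul_le_mul_of_nonneg_right ?_ (mul_nonneg (Nat.cast_nonneg _)
          (prod_nonneg fun j _ => pow_nonneg (hq j) _)))
      exact pow_le_pow_left₀ (by positivity) (mul_le_mul_of_nonneg_left
        (Nat.cast_le.2 (Nat.succ_le_succ hcard)) (Real.exp_pos 1).le) _
    · rw [one_mul]
      refine pow_sum_le_multinomial_mul_prod_biasedWeights r hp0 fun j hj => ?_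
      refine card_eq_zero.2 (filter_eq_empty_iff.2 fun x hx ⟨hxv, hxj⟩ => hv ?_)
      exact mem_image.2 ⟨x, mem_filter.2 ⟨hx, hxj ▸ hj⟩, hxv⟩
  calc p ^ #Rᶜ = ∏ v ∈ univ.image w, p ^ (∑ j, count v j) := by
        simp only [hcount]
        rw [prod_pow_eq_pow_sum,
          ← card_eq_sum_card_fiberwise fun x _ => mem_image_of_mem w (mem_univ x)]
    _ ≤ _ := prod_le_prod (fun v _ => pow_nonneg hp0 _) fun v _ => hclass v
    _ = _ := by
      rw [prod_mul_distrib, prod_mul_distrib, prod_ite_mem,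
        inter_eq_right.2 (image_subset_image (subset_univ _)),
        ← prod_fiberwise_of_maps_to (fun x (_ : x ∈ Rᶜ) => mem_image_of_mem w (mem_univ x))]
      congr 2
      refine prod_congr rfl fun v _ => ?_
      rw [← prod_fiberwise' _ f]
      simp only [count, filter_filter, prod_const]

lemma pow_card_mul_le_prod_mul_add {α : Type*} [Fintype α] [DecidableEq α] {a c : ℝ} {g : α → ℝ}
    (R : Finset α) (ha : 0 ≤ a) (hc : 0 ≤ c) (hc1 : c ≤ 1) (hg : ∀ x, 0 ≤ g x) :
    c ^ Fintype.card α * a ^ #R * ∏ x ∈ Rᶜ, g x ≤ ∏ x, (c * g x + a) := by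
  have hgR : 0 ≤ ∏ x ∈ Rᶜ, g x := prod_nonneg fun x _ => hg x
  calc c ^ Fintype.card α * a ^ #R * ∏ x ∈ Rᶜ, g x
      ≤ c ^ #Rᶜ * a ^ #R * ∏ x ∈ Rᶜ, g x := by
        gcongr ?_ * _ * _
        exact pow_le_pow_of_le_one hc hc1 (card_le_univ _)
    _ = (∏ _x ∈ R, a) * ∏ x ∈ Rᶜ, c * g x := by
        rw [prod_const, prod_mul_distrib, prod_const]
        ring
    _ ≤ (∏ x ∈ R, (c * g x + a)) * ∏ x ∈ Rᶜ, (c * g x + a) := by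
        have hcg := fun x => mul_nonneg hc (hg x)
        exact mul_le_mul
          (prod_le_prod (fun _ _ => ha) fun x _ => le_add_of_nonneg_left (hcg x))
          (prod_le_prod (fun x _ => hcg x) fun _ _ => le_add_of_nonneg_right ha)
          (prod_nonneg fun x _ => hcg x) (prod_nonneg fun x _ => add_nonneg (hcg x) ha)
    _ = ∏ x, (c * g x + a) := prod_mul_prod_compl R _

variable {d n : ℕ} {μ : Fin n → ℝ}

lemma IsProportionalFill.mul_pow_le_mul_rhoDiv {o : Fin d} {r : Fin d → ℝ} {w : Fin n → ℕ}
    {R : Finset (Fin n)} {T : ℕ} {f : Fin n → Fin d}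
    (h : IsProportionalFill o r w univ R (fun _ => T) f) (hd : 2 ≤ d) (hT : T ≠ 0)
    (hwμ : ∀ x, (w x : ℝ) = d * T * μ x) {c : ℝ} (hc : 0 ≤ c) (hc1 : c ≤ 1) :
    (c * criticalBias d) ^ n * ((1 - c) / d) ^ #R ≤
      (∏ v ∈ ({x ∈ Rᶜ | f x ≠ o} : Finset (Fin n)).image w,
        (Real.exp 1 * (#{x | w x = v} + 1 : ℕ)) ^ d) * rhoDiv d n μ := by
  have hd0 : (d : ℝ) ≠ 0 := by exact_mod_cast (zero_lt_two.trans_le hd).ne'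
  have hT0 : (T : ℝ) ≠ 0 := by exact_mod_cast hT
  have hp0 := criticalBias_pos hd
  have hp1 := criticalBias_lt_one hd
  have hq := biasedWeights_nonneg (o := o) hp0.le hp1.le h.nonneg
  have ha : 0 ≤ (1 - c) / d := div_nonneg (sub_nonneg.2 hc1) d.cast_nonneg
  have hdiv : ∀ j, ∑ x with f x = j, μ x = 1 / (d : ℝ) := fun j => by
    have := congrArg (Nat.cast (R := ℝ)) (h.load j)
    rw [Nat.cast_sum, sum_congr rfl fun x _ => hwμ x, ← mul_sum] at this
    field_simp at this ⊢
    linarith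
  have hclass : ∀ x y, w x = w y → μ x = μ y := fun x y hxy =>
    mul_left_cancel₀ (mul_ne_zero hd0 hT0) (by rw [← hwμ, ← hwμ, hxy])
  have hsum : ∑ j, (c * biasedWeights o (criticalBias d) r j + (1 - c) / d) = 1 := by
    rw [sum_add_distrib, ← mul_sum, sum_biasedWeights h.sum_eq_one, sum_const, card_univ,
      Fintype.card_fin, nsmul_eq_mul]
    field_simp
    ring
  have hdivision := prod_multinomial_mul_prod_le_rhoDiv hclass hdiv R
    (fun j => add_nonneg (mul_nonneg hc (hq j)) ha) hsum
  have hbias := h.pow_card_le (by rwa [Fintype.card_fin])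
  rw [Fintype.card_fin] at hbias
  set mult := ∏ v ∈ univ.image w,
    (Nat.multinomial univ fun j => #{x ∈ Rᶜ | w x = v ∧ f x = j} : ℝ)
  set mixing := ∏ v ∈ ({x ∈ Rᶜ | f x ≠ o} : Finset (Fin n)).image w,
        (Real.exp 1 * (#{x | w x = v} + 1 : ℕ)) ^ d
  calc (c * criticalBias d) ^ n * ((1 - c) / d) ^ #R
      ≤ c ^ n * ((1 - c) / d) ^ #R * criticalBias d ^ #Rᶜ := by
        rw [mul_pow, mul_right_comm]
        gcongr ?_ * ?_
        refine pow_le_pow_of_le_one hp0.le hp1.le ?_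
        simpa using card_le_univ Rᶜ
    _ ≤ c ^ n * ((1 - c) / d) ^ #R *
          (mixing * (mult * ∏ x ∈ Rᶜ, biasedWeights o (criticalBias d) r (f x))) := by gcongr
    _ = mixing * (mult * (c ^ n * ((1 - c) / d) ^ #R *
          ∏ x ∈ Rᶜ, biasedWeights o (criticalBias d) r (f x))) := by ring
    _ ≤ mixing * rhoDiv d n μ := by
        refine mul_le_mul_of_nonneg_left (le_trans ?_ hdivision) (by positivity)
        gcongr
        simpa using pow_card_mul_le_prod_mul_add R ha hc hc1 fun x => hq (f x)

lemma add_one_le_mul_exp_pow {s : ℝ} (hs : 0 < s) (m : ℕ) :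
    (m + 1 : ℝ) ≤ (1 + s⁻¹) * Real.exp s ^ m := by
  rw [← Real.exp_nat_mul]
  calc (m + 1 : ℝ) ≤ (1 + s⁻¹) * (m * s + 1) := by
        have : s⁻¹ * (m * s) = m := by field_simp
        have : 0 ≤ m * s + s⁻¹ := by positivity
        linarith
    _ ≤ (1 + s⁻¹) * Real.exp (m * s) := by
        gcongr
        exact Real.add_one_le_exp _

lemma exists_mul_add_one_pow_le_mul_pow {c : ℝ} (hc : 1 < c) {k : ℕ} (hk : k ≠ 0) :
    ∃ B : ℝ, 1 ≤ B ∧ ∀ m : ℕ, (Real.exp 1 * (m + 1 : ℕ)) ^ k ≤ B * c ^ m := by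
  have hk0 : (0 : ℝ) < k := by exact_mod_cast Nat.pos_of_ne_zero hk
  set s := Real.log c / k
  have hs : 0 < s := div_pos (Real.log_pos hc) hk0
  have hsc : Real.exp s ^ k = c := by
    rw [← Real.exp_nat_mul, mul_div_cancel₀ _ hk0.ne', Real.exp_log (zero_lt_one.trans hc)]
  refine ⟨(Real.exp 1 * (1 + s⁻¹)) ^ k, one_le_pow₀ (one_le_mul_of_one_le_of_one_le
    (Real.one_le_exp zero_le_one) (le_add_of_nonneg_right (inv_nonneg.2 hs.le))), fun m => ?_⟩
  rw [← hsc, ← pow_mul, mul_comm k, pow_mul, ← mul_pow, mul_assoc, Nat.cast_succ]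
  gcongr
  exact add_one_le_mul_exp_pow hs m

lemma prod_card_fiber_le_pow_mul_pow {α β : Type*} [Fintype α] [DecidableEq β] (w : α → β)
    (M : Finset β) {φ : ℕ → ℝ} {B c : ℝ} (hφ : ∀ m, 0 ≤ φ m) (hB : 0 ≤ B) (hc : 1 ≤ c)
    (hφB : ∀ m, φ m ≤ B * c ^ m) :
    ∏ v ∈ M, φ #{x | w x = v} ≤ B ^ #M * c ^ Fintype.card α := by
  have hcard : ∑ v ∈ M, #{x | w x = v} ≤ Fintype.card α := by
    rw [sum_card_fiberwise_eq_card_filter]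
    exact card_le_univ _
  calc ∏ v ∈ M, φ #{x | w x = v} ≤ ∏ v ∈ M, B * c ^ #{x | w x = v} :=
        prod_le_prod (fun v _ => hφ _) fun v _ => hφB _
    _ = B ^ #M * c ^ ∑ v ∈ M, #{x | w x = v} := by
        rw [prod_mul_distrib, prod_const, prod_pow_eq_pow_sum]
    _ ≤ _ := by gcongr

lemma IsDadicDist.exists_scaled_weights (hd : 2 ≤ d) (hμ : IsDadicDist d n μ) (V : ℕ) :
    ∃ (τ : ℕ) (w : Fin n → ℕ), (∀ x, (w x : ℝ) = (d : ℝ) ^ (τ + V + 1) * μ x) ∧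
      ∀ x, w x = 0 ∨ ∃ e ≤ τ + V, w x = d ^ e := by
  have hd0 : (d : ℝ) ≠ 0 := by exact_mod_cast (zero_lt_two.trans_le hd).ne'
  have hlevel : ∀ x, ∃ l : ℕ, 1 ≤ l ∧ (μ x = 0 ∨ μ x = ((d : ℝ) ^ l)⁻¹) := fun x =>
    (hμ.2.2 x).elim (fun h => ⟨1, le_rfl, .inl h⟩) fun ⟨l, hl, h⟩ => ⟨l, hl, .inr h⟩
  choose l hl1 hl using hlevel
  have hlτ : ∀ x, l x ≤ univ.sup l := fun x => le_sup (mem_univ x)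
  refine ⟨univ.sup l, fun x => if μ x = 0 then 0 else d ^ (univ.sup l + V + 1 - l x),
    fun x => ?_, fun x => ?_⟩
  · by_cases hx : μ x = 0
    · simp [hx]
    · have := hlτ x
      beta_reduce
      rw [if_neg hx, (hl x).resolve_left hx, ← div_eq_mul_inv, eq_div_iff (pow_ne_zero _ hd0)]
      push_cast
      rw [← pow_add]
      congr 1
      lia
  · by_cases hx : μ x = 0
    · exact .inl (if_pos hx)
    · have := hl1 x
      exact .inr ⟨_, by lia, if_neg hx⟩

lemma exists_isProportionalFill_of_isDadicDist (hd : 2 ≤ d) {θ : ℝ} (hθ : 0 < θ) (hθ1 : θ ≤ 1)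
    (o : Fin d) :
    ∃ D : ℕ, ∀ (n : ℕ) (μ : Fin n → ℝ), IsDadicDist d n μ →
      ∃ (T : ℕ) (w : Fin n → ℕ) (r : Fin d → ℝ) (f : Fin n → Fin d) (R : Finset (Fin n)),
        T ≠ 0 ∧ (∀ x, (w x : ℝ) = d * T * μ x) ∧ IsProportionalFill o r w univ R (fun _ => T) f ∧
        #R ≤ D + 2 * θ * n ∧ #(({x ∈ Rᶜ | f x ≠ o} : Finset (Fin n)).image w) ≤ θ * n := by
  obtain ⟨K, hK⟩ := exists_nat_ge (2 * d / θ)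
  obtain ⟨V, hV⟩ := pow_unbounded_of_one_lt (K / θ) (show (1 : ℝ) < d by exact_mod_cast hd)
  rw [div_le_iff₀' hθ] at hK
  rw [div_lt_iff₀' hθ] at hV
  refine ⟨d ^ (V + 1), fun n μ hμ => ?_⟩
  obtain ⟨τ, w, hwμ, hw⟩ := hμ.exists_scaled_weights hd V
  have hsum : ∑ x, w x = d ^ (τ + V + 1) := by
    have : (∑ x, (w x : ℝ)) = d ^ (τ + V + 1) := by
      rw [sum_congr rfl fun x _ => hwμ x, ← mul_sum, hμ.2.1, mul_one]
    exact_mod_cast this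
  obtain ⟨r, f, R, hf, hR, hmixed⟩ :=
    exists_isProportionalFill_univ hd hθ.le hθ1 hK hV.le w hw hsum (Fintype.card_fin d) o
  rw [Fintype.card_fin] at hR hmixed
  refine ⟨d ^ (τ + V), w, r, f, R, (Nat.pow_pos (zero_lt_two.trans_le hd)).ne', fun x => ?_, hf, hR,
    hmixed⟩
  rw [hwμ, pow_succ']
  push_cast
  ring

lemma exists_rpow_ge {y a : ℝ} (hy : 0 < y) (ha : a < 1) : ∃ θ : ℝ, 0 < θ ∧ θ ≤ 1 ∧ a ≤ y ^ θ := by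
  have hlim : Filter.Tendsto (fun θ : ℝ => y ^ θ) (nhdsWithin 0 (Set.Ioi 0)) (nhds 1) := by
    simpa using ((Real.continuous_const_rpow hy.ne').tendsto 0).mono_left nhdsWithin_le_nhds
  obtain ⟨θ, ⟨haθ, hθ1⟩, hθ⟩ := (((hlim.eventually_const_le ha).and
    (nhdsWithin_le_nhds (eventually_le_nhds zero_lt_one))).and self_mem_nhdsWithin).exists
  exact ⟨θ, hθ, hθ1, haθ⟩

lemma pow_mul_pow_mul_pow_le_pow {η B a θ : ℝ} {D k m n : ℕ} (hη : 0 < η) (hη1 : η ≤ 1)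
    (hB : 1 ≤ B) (ha : 0 ≤ a) (haθ : a ≤ (η ^ 2 / B) ^ θ) (hk : (k : ℝ) ≤ D + 2 * θ * n)
    (hm : (m : ℝ) ≤ θ * n) : η ^ D * a ^ n * B ^ m ≤ η ^ k := by
  have hB0 : 0 < B := zero_lt_one.trans_le hB
  calc η ^ D * a ^ n * B ^ m
      ≤ η ^ D * ((η ^ 2 / B) ^ θ) ^ n * B ^ (θ * n) := by
        rw [← Real.rpow_natCast B]
        gcongr
    _ = η ^ (D + 2 * θ * n) := by
        rw [Real.div_rpow (by positivity) hB0.le, div_pow, ← Real.rpow_mul_natCast hB0.le,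
          mul_assoc,
          div_mul_cancel₀ _ (Real.rpow_pos_of_pos hB0 _).ne', Real.rpow_add hη, Real.rpow_natCast,
          ← Real.rpow_mul_natCast (by positivity), ← Real.rpow_natCast_mul hη.le]
        push_cast
        ring_nf
    _ ≤ η ^ (k : ℝ) := Real.rpow_le_rpow_of_exponent_ge hη hη1 hk
    _ = η ^ k := Real.rpow_natCast η k

lemma rhoDiv_nonneg (μ : Fin n → ℝ) : 0 ≤ rhoDiv d n μ := by
  refine Real.sSup_nonneg ?_
  rintro _ ⟨k, -, rfl⟩
  exact div_nonneg (Nat.cast_nonneg _) (Nat.cast_nonneg _)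

lemma exists_mul_pow_le_rhoDiv (hd : 2 ≤ d) {b : ℝ} (hb : 0 < b) (hb1 : b < 1) :
    ∃ C > 0, ∀ (n : ℕ) (μ : Fin n → ℝ), IsDadicDist d n μ →
      C * (b * criticalBias d) ^ n ≤ rhoDiv d n μ := by
  -- Smoothing, the reserve and the mixed weight classes each cost a factor `a` per element.
  obtain ⟨a, ha, ha1, rfl⟩ : ∃ a : ℝ, 0 < a ∧ a < 1 ∧ a ^ 3 = b :=
    ⟨b ^ (3 : ℝ)⁻¹, Real.rpow_pos_of_pos hb _, Real.rpow_lt_one hb.le hb1 (by norm_num),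
      Real.rpow_inv_natCast_pow hb.le three_ne_zero⟩
  have hd0 : (0 : ℝ) < d := by exact_mod_cast zero_lt_two.trans_le hd
  have hainv : 1 < a⁻¹ := (one_lt_inv₀ ha).2 ha1
  obtain ⟨B, hB1, hB⟩ := exists_mul_add_one_pow_le_mul_pow hainv (zero_lt_two.trans_le hd).ne'
  have hB0 : 0 < B := zero_lt_one.trans_le hB1
  set η := (1 - a) / d with hη
  have hη0 : 0 < η := div_pos (sub_pos.2 ha1) hd0
  have hη1 : η ≤ 1 := by
    have : (1 : ℝ) ≤ d := by exact_mod_cast one_le_two.trans hd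
    rw [hη, div_le_one hd0]
    linarith
  obtain ⟨θ, hθ, hθ1, haθ⟩ := exists_rpow_ge (div_pos (pow_pos hη0 2) hB0) ha1
  set o : Fin d := ⟨0, zero_lt_two.trans_le hd⟩
  obtain ⟨D, hD⟩ := exists_isProportionalFill_of_isDadicDist hd hθ hθ1 o
  refine ⟨η ^ D, pow_pos hη0 D, fun n μ hμ => ?_⟩
  obtain ⟨T, w, r, f, R, hT, hwμ, hf, hR, hmixed⟩ := hD n μ hμ
  set M := ({x ∈ Rᶜ | f x ≠ o} : Finset (Fin n)).image w
  refine le_of_mul_le_mul_left ?_ (show 0 < B ^ #M * a⁻¹ ^ n by positivity)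
  calc B ^ #M * a⁻¹ ^ n * (η ^ D * (a ^ 3 * criticalBias d) ^ n)
      = (a * criticalBias d) ^ n * (η ^ D * a ^ n * B ^ #M) := by
        have : a⁻¹ ^ n * (a ^ 3 * criticalBias d) ^ n = (a * criticalBias d) ^ n * a ^ n := by
          rw [← mul_pow, ← mul_pow]
          congr 1
          field_simp
        linear_combination (B ^ #M * η ^ D) * this
    _ ≤ (a * criticalBias d) ^ n * η ^ #R := by
        have := criticalBias_pos hd
        gcongr
        exact pow_mul_pow_mul_pow_le_pow hη0 hη1 hB1 ha.le haθ hR hmixed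
    _ ≤ _ := hf.mul_pow_le_mul_rhoDiv hd hT hwμ ha.le ha1.le
    _ ≤ B ^ #M * a⁻¹ ^ n * rhoDiv d n μ := by
        refine mul_le_mul_of_nonneg_right ?_ (rhoDiv_nonneg μ)
        simpa using prod_card_fiber_le_pow_mul_pow w M (fun m => by positivity) hB0.le hainv.le hB

theorem rhoDiv_lower_general (hd : 2 ≤ d) {ε : ℝ} (hε : 0 < ε) :
    ∀ᶠ n : ℕ in Filter.atTop, ∀ μ : Fin n → ℝ, IsDadicDist d n μ →
      (2 : ℝ) ^ ((fdFun d (criticalBeta d) - ε) * n) ≤ rhoDiv d n μ := by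
  set b : ℝ := 2 ^ (-(ε / 2)) with hb
  have hb0 : 0 < b := Real.rpow_pos_of_pos two_pos _
  have hb1 : b < 1 := Real.rpow_lt_one_of_one_lt_of_neg one_lt_two (by linarith)
  obtain ⟨C, hC, hlower⟩ := exists_mul_pow_le_rhoDiv hd hb0 hb1
  have hp := criticalBias_pos hd
  have hp2 : (2 : ℝ) ^ Real.logb 2 (criticalBias d) = criticalBias d :=
    Real.rpow_logb two_pos (by norm_num) hp
  have hb2 : (2 : ℝ) ^ (-ε) = b * b := by
    rw [hb, ← Real.rpow_add two_pos]
    congr 1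
    ring
  filter_upwards [(tendsto_pow_atTop_nhds_zero_of_lt_one hb0.le hb1).eventually_le_const hC]
    with n hn μ hμ
  calc (2 : ℝ) ^ ((fdFun d (criticalBeta d) - ε) * n) = b ^ n * (b * criticalBias d) ^ n := by
        rw [fdFun_criticalBeta hd, Real.rpow_mul_natCast two_pos.le, sub_eq_add_neg,
          Real.rpow_add two_pos, hp2, hb2, ← mul_pow]
        ring
    _ ≤ C * (b * criticalBias d) ^ n := by gcongr
    _ ≤ rhoDiv d n μ := hlower n μ hμ

end Assembly

end EquitableDivision

/-- Lower bound: for `n` large, every non-constant `d`-adic distribution `μ` on `X_n`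
satisfies `ρ(Div(μ)) ≥ 2^{(f_d(β)−ε)n}` for some `β ∈ (0, 1/(d−1)]`. -/
theorem rhoDiv_lower (d : ℕ) (hd : 2 ≤ d) :
    ∀ ε > (0 : ℝ), ∃ N : ℕ, ∀ n : ℕ, N ≤ n →
      ∀ μ : Fin n → ℝ, IsDadicDist d n μ → (∃ i j, μ i ≠ μ j) →
        ∃ β : ℝ, 0 < β ∧ β ≤ 1 / ((d : ℝ) - 1) ∧
          (2 : ℝ) ^ ((fdFun d β - ε) * n) ≤ rhoDiv d n μ := by
  intro ε hε
  obtain ⟨N, hN⟩ := Filter.eventually_atTop.1 (rhoDiv_lower_general hd hε)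
  exact ⟨N, fun n hn μ hμ _ =>
    ⟨criticalBeta d, criticalBeta_pos hd, criticalBeta_le hd, hN n hn μ hμ⟩⟩
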